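/- Let Ω be a bounded domain in ℂⁿ (n ≥ 2). Suppose there exists a connected open set U ⊆ ℂⁿ with U ∩ ∂Ω ≠ ∅ such that Ω ∩ U is a log-type convex domain. Then for any open set V ⊆ U with closure(V) ⊆ U, there exists a constant K > 0 such that K_Ω(p,q) ≤ K_{Ω∩U}(p,q) ≤ K_Ω(p,q) + K for all p, q ∈ V ∩ Ω. -/

import Mathlib

open Metric Set MeasureTheory Filter Topology

noncomputable section

variable {E : Type*} [NormedAddCommGroup E] [NormedSpace ℂ E]

/-- Distance from `x` to the boundary of `D`. -/
def bdist (D : Set E) (x : E) : ℝ := Metric.infDist x (frontier D)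

/-- Distance from `x` to the boundary of `D` along the complex line `x + ℂ v`. -/
def bdistDir (D : Set E) (x v : E) : ℝ :=
  Metric.infDist x (frontier D ∩ {w | ∃ c : ℂ, w = x + c • v})

/-- The infinitesimal Kobayashi (pseudo-)metric of `D ⊆ E`. -/
def kobMetric (D : Set E) (x v : E) : ℝ :=
  sInf { r : ℝ | ∃ (f : ℂ → E) (ξ : ℂ),
    DifferentiableOn ℂ f (ball (0:ℂ) 1) ∧ MapsTo f (ball (0:ℂ) 1) D ∧
    f 0 = x ∧ ξ • derivWithin f (ball (0:ℂ) 1) 0 = v ∧ r = ‖ξ‖ }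

/-- `σ` is absolutely continuous on `[a,b]`, with a.e. derivative `g`. -/
def IsACWithDeriv (σ g : ℝ → E) (a b : ℝ) : Prop :=
  IntervalIntegrable g volume a b ∧
  ∀ t ∈ Icc a b, σ t = σ a + ∫ s in a..t, g s

/-- The Kobayashi pseudo-distance of `D`, defined via lengths of absolutely
continuous curves (Venturini's description). -/
def kobDist (D : Set E) (x y : E) : ℝ :=
  sInf { r : ℝ | ∃ (a b : ℝ) (σ g : ℝ → E), a ≤ b ∧
    IsACWithDeriv σ g a b ∧ MapsTo σ (Icc a b) D ∧ σ a = x ∧ σ b = y ∧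
    r = ∫ t in a..b, kobMetric D (σ t) (g t) }

/-- Log-type convex domain, with explicit constants `C, ν > 0`. -/
def LogTypeConvexWith (D : Set E) (C ν : ℝ) : Prop :=
  IsOpen D ∧ D.Nonempty ∧ Bornology.IsBounded D ∧ Convex ℝ D ∧ 0 < C ∧ 0 < ν ∧
  ∀ z ∈ D, ∀ v : E, v ≠ 0 →
    bdistDir D z v ≤ C / |Real.log (bdist D z)| ^ (1 + ν)

/-- Log-type convex domain. -/
def LogTypeConvex (D : Set E) : Prop := ∃ C ν : ℝ, LogTypeConvexWith D C ν

/-- A `ℂ`-convex set: every nonempty intersection with a complex affine line is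
connected and simply connected. -/
def CConvex (D : Set E) : Prop :=
  ∀ z v : E, v ≠ 0 → (D ∩ {w | ∃ c : ℂ, w = z + c • v}).Nonempty →
    IsConnected (D ∩ {w | ∃ c : ℂ, w = z + c • v}) ∧
    SimplyConnectedSpace ↥(D ∩ {w | ∃ c : ℂ, w = z + c • v})

/-- Log-type `ℂ`-convex domain. -/
def LogTypeCConvex (D : Set E) : Prop :=
  IsOpen D ∧ D.Nonempty ∧ Bornology.IsBounded D ∧ CConvex D ∧
  ∃ C ν : ℝ, 0 < C ∧ 0 < ν ∧
    ∀ z ∈ D, ∀ v : E, v ≠ 0 →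
      bdistDir D z v ≤ C / |Real.log (bdist D z)| ^ (1 + ν)

/-- `σ : [a,b] → D` (with a.e. derivative `g`) is a `(λ,κ)`-almost geodesic for the
Kobayashi distance of `D`. -/
def AlmostGeodesicOn (D : Set E) (lam kap : ℝ) (σ g : ℝ → E) (a b : ℝ) : Prop :=
  MapsTo σ (Icc a b) D ∧ IsACWithDeriv σ g a b ∧
  (∀ s ∈ Icc a b, ∀ t ∈ Icc a b,
    (1 / lam) * |t - s| - kap ≤ kobDist D (σ s) (σ t) ∧
    kobDist D (σ s) (σ t) ≤ lam * |t - s| + kap) ∧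
  (∀ᵐ t ∂volume, t ∈ Icc a b → kobMetric D (σ t) (g t) ≤ lam)

/-- `σ : [a,b] → D` is a `C`-rough geodesic for the Kobayashi distance of `D`. -/
def RoughGeodesicOn (D : Set E) (C : ℝ) (σ : ℝ → E) (a b : ℝ) : Prop :=
  MapsTo σ (Icc a b) D ∧
  ∀ s ∈ Icc a b, ∀ t ∈ Icc a b,
    |t - s| - C ≤ kobDist D (σ s) (σ t) ∧ kobDist D (σ s) (σ t) ≤ |t - s| + C

/-- `ρ` is a `C¹` local defining function for `D` near `ξ` on the open set `W`. -/
def IsLocalDefiningFn (D : Set E) (ξ : E) (W : Set E) (ρ : E → ℝ) : Prop :=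
  IsOpen W ∧ ξ ∈ W ∧ ContDiffOn ℝ 1 ρ W ∧ (∀ x ∈ W, fderiv ℝ ρ x ≠ 0) ∧
  D ∩ W = {x ∈ W | ρ x < 0} ∧ frontier D ∩ W = {x ∈ W | ρ x = 0}

/-- `ξ` is a Dini-smooth boundary point of `D`: the boundary is `C¹` near `ξ` and the
unit normal admits a modulus of continuity `ω` satisfying the Dini condition. -/
def DiniSmoothBoundaryPoint (D : Set E) (ξ : E) : Prop :=
  ∃ (W : Set E) (ρ : E → ℝ) (ω : ℝ → ℝ),
    IsLocalDefiningFn D ξ W ρ ∧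
    (∀ t ∈ Icc (0:ℝ) 1, 0 ≤ ω t) ∧ MonotoneOn ω (Icc (0:ℝ) 1) ∧
    IntegrableOn (fun t => ω t / t) (Ioc (0:ℝ) 1) ∧
    ∀ x ∈ frontier D ∩ W, ∀ y ∈ frontier D ∩ W, ‖x - y‖ ≤ 1 →
      ‖(‖fderiv ℝ ρ x‖)⁻¹ • fderiv ℝ ρ x - (‖fderiv ℝ ρ y‖)⁻¹ • fderiv ℝ ρ y‖ ≤ ω ‖x - y‖

/-- `D` has `C^{1,ε}` boundary: near every boundary point there is a `C¹` defining
function whose differential is `ε`-Hölder. -/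
def HolderC1Boundary (D : Set E) (ε : ℝ) : Prop :=
  ∀ ξ ∈ frontier D, ∃ (W : Set E) (ρ : E → ℝ) (M : ℝ), 0 < M ∧
    IsLocalDefiningFn D ξ W ρ ∧
    ∀ x ∈ W, ∀ y ∈ W, ‖fderiv ℝ ρ x - fderiv ℝ ρ y‖ ≤ M * ‖x - y‖ ^ ε

/-- The complex affine tangent hyperplane of `∂D` at `x`, computed from a local
defining function `ρ`. -/
def complexTangentHyperplane (ρ : E → ℝ) (x : E) : Set E :=
  {w : E | fderiv ℝ ρ x (w - x) = 0 ∧ fderiv ℝ ρ x ((Complex.I : ℂ) • (w - x)) = 0}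

/-- The Gromov product of `x` and `y` with respect to the base point `o`, for the
Kobayashi distance of `D`. -/
def gromovProd (D : Set E) (o x y : E) : ℝ :=
  (kobDist D x o + kobDist D o y - kobDist D x y) / 2

end

section KobMetricLemmas

variable {E : Type*} [NormedAddCommGroup E] [NormedSpace ℂ E]

/-- The competitor set in the definition of the Kobayashi metric. -/
def kobSet (D : Set E) (x v : E) : Set ℝ :=
  { r : ℝ | ∃ (f : ℂ → E) (ξ : ℂ),
    DifferentiableOn ℂ f (ball (0:ℂ) 1) ∧ MapsTo f (ball (0:ℂ) 1) D ∧
    f 0 = x ∧ ξ • derivWithin f (ball (0:ℂ) 1) 0 = v ∧ r = ‖ξ‖ }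

lemma derivWithin_ball_zero (f : ℂ → E) :
    derivWithin f (ball (0:ℂ) 1) 0 = deriv f 0 :=
  derivWithin_of_isOpen isOpen_ball (by simp)

lemma kobSet_bddBelow (D : Set E) (x v : E) : BddBelow (kobSet D x v) := by
  refine ⟨0, ?_⟩
  rintro r ⟨f, ξ, -, -, -, -, rfl⟩
  exact norm_nonneg _

lemma kobMetric_nonneg (D : Set E) (x v : E) : 0 ≤ kobMetric D x v := by
  apply Real.sInf_nonneg
  rintro r ⟨f, ξ, -, -, -, -, rfl⟩
  exact norm_nonneg _

lemma kobMetric_le {D : Set E} {x v : E} (f : ℂ → E) (ξ : ℂ) (f' : E)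
    (hf : DifferentiableOn ℂ f (ball (0:ℂ) 1)) (hm : MapsTo f (ball (0:ℂ) 1) D)
    (h0 : f 0 = x) (hd : HasDerivAt f f' 0) (hv : ξ • f' = v) :
    kobMetric D x v ≤ ‖ξ‖ := by
  apply csInf_le (kobSet_bddBelow D x v)
  exact ⟨f, ξ, hf, hm, h0, by rw [derivWithin_ball_zero, hd.deriv, hv], rfl⟩

lemma kobSet_ball {D : Set E} {x v : E} {ρ : ℝ} (hρ : 0 < ρ) (hb : ball x ρ ⊆ D) :
    (‖v‖ / ρ) ∈ kobSet D x v := by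
  by_cases hv : v = 0
  · subst hv
    refine ⟨fun _ => x, 0, by fun_prop, fun _ _ => hb (by simpa), rfl, by simp, by simp⟩
  · have hv' : 0 < ‖v‖ := norm_pos_iff.mpr hv
    refine ⟨fun w => x + w • (((ρ / ‖v‖ : ℝ) : ℂ) • v), ((‖v‖ / ρ : ℝ) : ℂ), by fun_prop, ?_,
      by simp, ?_, ?_⟩
    · intro w hw
      apply hb
      have hw' : ‖w‖ < 1 := by simpa using hw
      rw [mem_ball, dist_eq_norm, add_sub_cancel_left, norm_smul, norm_smul, Complex.norm_real,
        Real.norm_of_nonneg (by positivity), div_mul_cancel₀ _ hv'.ne']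
      nlinarith
    · have : HasDerivAt (fun w : ℂ => x + w • (((ρ / ‖v‖ : ℝ) : ℂ) • v))
          ((1:ℂ) • (((ρ / ‖v‖ : ℝ) : ℂ) • v)) 0 :=
        ((hasDerivAt_id (0:ℂ)).smul_const _).const_add x
      rw [derivWithin_ball_zero, this.deriv, one_smul, smul_smul, ← Complex.ofReal_mul]
      rw [show ‖v‖ / ρ * (ρ / ‖v‖) = 1 by field_simp]
      simp
    · rw [Complex.norm_real, Real.norm_of_nonneg (by positivity)]

lemma kobMetric_le_div {D : Set E} {x v : E} {ρ : ℝ} (hρ : 0 < ρ) (hb : ball x ρ ⊆ D) :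
    kobMetric D x v ≤ ‖v‖ / ρ :=
  csInf_le (kobSet_bddBelow D x v) (kobSet_ball hρ hb)

lemma kobSet_nonempty {D : Set E} (hD : IsOpen D) {x : E} (hx : x ∈ D) (v : E) :
    (kobSet D x v).Nonempty := by
  obtain ⟨ρ, hρ, hb⟩ := Metric.isOpen_iff.mp hD x hx
  exact ⟨_, kobSet_ball hρ hb⟩

/-- Royden type localisation with a radius `s`. -/
lemma kobMetric_local {D D' : Set E} (hD' : IsOpen D') {x : E} (hx : x ∈ D') (v : E) {s : ℝ}
    (hs : 0 < s) (hs1 : s ≤ 1)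
    (h : ∀ f : ℂ → E, DifferentiableOn ℂ f (ball (0:ℂ) 1) → MapsTo f (ball (0:ℂ) 1) D' →
      f 0 = x → ∀ w : ℂ, ‖w‖ < s → f w ∈ D) :
    kobMetric D x v ≤ s⁻¹ * kobMetric D' x v := by
  rw [inv_mul_eq_div, le_div_iff₀ hs]
  apply le_csInf (kobSet_nonempty hD' hx v)
  rintro r ⟨f, ξ, hf, hm, h0, hv, rfl⟩
  rw [derivWithin_ball_zero] at hv
  have hd : HasDerivAt f (deriv f 0) 0 :=
    ((hf 0 (by simp)).differentiableAt (isOpen_ball.mem_nhds (by simp))).hasDerivAt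
  have hmap : MapsTo (fun w : ℂ => (s:ℂ) * w) (ball (0:ℂ) 1) (ball (0:ℂ) 1) := by
    intro w hw
    have hw' : ‖w‖ < 1 := by simpa using hw
    simp only [mem_ball, dist_zero_right, norm_mul, Complex.norm_real, Real.norm_of_nonneg hs.le]
    nlinarith [norm_nonneg w]
  have key : kobMetric D x v ≤ ‖ξ / (s:ℂ)‖ := by
    apply kobMetric_le (fun w => f ((s:ℂ) * w)) (ξ / (s:ℂ)) ((s:ℂ) • deriv f 0)
    · exact hf.comp (by fun_prop) hmap
    · intro w hw
      have hw' : ‖w‖ < 1 := by simpa using hw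
      apply h f hf hm h0
      simp only [norm_mul, Complex.norm_real, Real.norm_of_nonneg hs.le]
      nlinarith [norm_nonneg w]
    · simp [h0]
    · have h1 : HasDerivAt (fun w : ℂ => (s:ℂ) * w) (s:ℂ) 0 := by
        simpa using (hasDerivAt_id (0:ℂ)).const_mul (s:ℂ)
      have h2 : HasDerivAt f (deriv f 0) ((s:ℂ) * 0) := by simpa using hd
      exact h2.scomp (0:ℂ) h1
    · rw [smul_smul, div_mul_cancel₀ _ (by exact_mod_cast hs.ne'), hv]
  rw [norm_div, Complex.norm_real, Real.norm_of_nonneg hs.le, le_div_iff₀ hs] at key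
  exact key

lemma kobMetric_mono {D D' : Set E} (hD : IsOpen D) (hDD : D ⊆ D') {x : E} (hx : x ∈ D) (v : E) :
    kobMetric D' x v ≤ kobMetric D x v := by
  apply le_csInf (kobSet_nonempty hD hx v)
  rintro r ⟨f, ξ, hf, hm, h0, hv, rfl⟩
  exact csInf_le (kobSet_bddBelow D' x v) ⟨f, ξ, hf, hm.mono_right hDD, h0, hv, rfl⟩

lemma kobMetric_neg (D : Set E) (x v : E) : kobMetric D x (-v) = kobMetric D x v := by
  have key : ∀ w : E, kobSet D x w ⊆ kobSet D x (-w) := by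
    rintro w r ⟨f, ξ, hf, hm, h0, hv, rfl⟩
    exact ⟨f, -ξ, hf, hm, h0, by rw [neg_smul, hv], by simp⟩
  have : kobSet D x (-v) = kobSet D x v :=
    Subset.antisymm (by simpa using key (-v)) (key v)
  exact congrArg sInf this

/-- Upper semicontinuity of the Kobayashi metric. -/
lemma kobMetric_usc [ProperSpace E] {D : Set E} (hD : IsOpen D) (c : ℝ) :
    IsOpen {p : E × E | p.1 ∈ D ∧ kobMetric D p.1 p.2 < c} := by
  rw [Metric.isOpen_iff]
  rintro ⟨x, v⟩ ⟨hx, hk⟩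
  simp only at hx hk
  obtain ⟨r, ⟨f, ξ, hf, hm, h0, hv, rfl⟩, hr⟩ :=
    (csInf_lt_iff (kobSet_bddBelow D x v) (kobSet_nonempty hD hx v)).mp hk
  rw [derivWithin_ball_zero] at hv
  have hd : HasDerivAt f (deriv f 0) 0 :=
    ((hf 0 (by simp)).differentiableAt (isOpen_ball.mem_nhds (by simp))).hasDerivAt
  obtain ⟨c', hc1, hc2⟩ := exists_between hr
  have hc0 : 0 < c' := (norm_nonneg _).trans_lt hc1
  set lam : ℂ := ξ / (c':ℂ) with hlam
  have hlam1 : ‖lam‖ < 1 := by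
    rw [hlam, norm_div, Complex.norm_real, Real.norm_of_nonneg hc0.le, div_lt_one hc0]; exact hc1
  have hcb : closedBall (0:ℂ) ‖lam‖ ⊆ ball (0:ℂ) 1 := closedBall_subset_ball hlam1
  have hcomp : IsCompact (f '' closedBall (0:ℂ) ‖lam‖) :=
    (isCompact_closedBall _ _).image_of_continuousOn (hf.continuousOn.mono hcb)
  obtain ⟨ε, hε, hth⟩ := hcomp.exists_thickening_subset_open hD
    (by rintro _ ⟨w, hw, rfl⟩; exact hm (hcb hw))
  have hmap : ∀ w ∈ ball (0:ℂ) 1, lam * w ∈ closedBall (0:ℂ) ‖lam‖ := by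
    intro w hw
    have hw' : ‖w‖ < 1 := by simpa using hw
    simp only [mem_closedBall, dist_zero_right, norm_mul]
    nlinarith [norm_nonneg w, norm_nonneg lam]
  have hη : 0 < min (ε / 2) (c' * (ε / 2)) := by positivity
  refine ⟨min (ε / 2) (c' * (ε / 2)), hη, ?_⟩
  rintro ⟨x', v'⟩ hp
  rw [mem_ball, Prod.dist_eq, max_lt_iff, dist_eq_norm, dist_eq_norm, lt_min_iff, lt_min_iff] at hp
  obtain ⟨⟨h1, -⟩, ⟨-, h2⟩⟩ := hp
  simp only at h1 h2
  have hin : ∀ w ∈ ball (0:ℂ) 1, f (lam * w) + (x' - x) + w • (((c':ℂ))⁻¹ • (v' - v)) ∈ D := by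
    intro w hw
    have hw' : ‖w‖ < 1 := by simpa using hw
    apply hth
    rw [mem_thickening_iff]
    refine ⟨f (lam * w), ⟨_, hmap w hw, rfl⟩, ?_⟩
    rw [dist_eq_norm, show f (lam * w) + (x' - x) + w • (((c':ℂ))⁻¹ • (v' - v)) - f (lam * w)
      = (x' - x) + w • (((c':ℂ))⁻¹ • (v' - v)) by abel]
    have h3 : ‖((c':ℂ))⁻¹ • (v' - v)‖ < ε / 2 := by
      rw [norm_smul, norm_inv, Complex.norm_real, Real.norm_of_nonneg hc0.le, inv_mul_lt_iff₀ hc0]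
      exact h2
    have h4 : ‖w • (((c':ℂ))⁻¹ • (v' - v))‖ ≤ ‖((c':ℂ))⁻¹ • (v' - v)‖ := by
      rw [norm_smul]; nlinarith [norm_nonneg (((c':ℂ))⁻¹ • (v' - v))]
    linarith [norm_add_le (x' - x) (w • (((c':ℂ))⁻¹ • (v' - v)))]
  have hfin : kobMetric D x' v' ≤ ‖(c':ℂ)‖ := by
    apply kobMetric_le (fun w => f (lam * w) + (x' - x) + w • (((c':ℂ))⁻¹ • (v' - v))) (c':ℂ)
      (lam • deriv f 0 + (1:ℂ) • (((c':ℂ))⁻¹ • (v' - v)))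
    · refine ((hf.comp (g := f) (f := fun w => lam * w) (by fun_prop) ?_).add_const _).add
        (by fun_prop)
      exact fun w hw => hcb (hmap w hw)
    · exact hin
    · simp [h0]
    · have e1 : HasDerivAt (fun w : ℂ => lam * w) lam 0 := by
        simpa using (hasDerivAt_id (0:ℂ)).const_mul lam
      have e2 : HasDerivAt f (deriv f 0) (lam * 0) := by simpa using hd
      exact ((e2.scomp (0:ℂ) e1).add_const _).add ((hasDerivAt_id (0:ℂ)).smul_const _)
    · have : (c':ℂ) ≠ 0 := by exact_mod_cast hc0.ne'
      rw [smul_add, smul_smul, one_smul, smul_smul, mul_inv_cancel₀ this, hlam,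
        mul_div_cancel₀ _ this, hv]
      simp
  rw [Complex.norm_real, Real.norm_of_nonneg hc0.le] at hfin
  refine ⟨?_, hfin.trans_lt hc2⟩
  have := hin 0 (by simp)
  simpa [h0] using this

lemma kobMetric_intervalIntegrable [ProperSpace E] {D : Set E} (hD : IsOpen D) {σ g : ℝ → E}
    {a b : ℝ} (hab : a ≤ b) (hσ : ContinuousOn σ (Icc a b)) (hm : MapsTo σ (Icc a b) D)
    (hg : IntervalIntegrable g volume a b) :
    IntervalIntegrable (fun t => kobMetric D (σ t) (g t)) volume a b := by
  borelize E
  classical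
  rw [intervalIntegrable_iff_integrableOn_Icc_of_le hab] at hg ⊢
  set H : E × E → ℝ := fun p => if p.1 ∈ D then kobMetric D p.1 p.2 else 0 with hH
  have hmeas : Measurable H := by
    apply measurable_of_Iio
    intro c
    by_cases hc : c ≤ 0
    · have : H ⁻¹' Iio c = ∅ := by
        ext p
        simp only [mem_preimage, mem_Iio, mem_empty_iff_false, iff_false, not_lt, hH]
        split_ifs
        · exact hc.trans (kobMetric_nonneg _ _ _)
        · exact hc
      rw [this]; exact MeasurableSet.empty
    · have : H ⁻¹' Iio c = {p : E × E | p.1 ∈ D ∧ kobMetric D p.1 p.2 < c} ∪ (Prod.fst ⁻¹' D)ᶜ := by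
        ext p
        simp only [mem_preimage, mem_Iio, mem_union, mem_ofPred_eq, mem_compl_iff, hH]
        push Not at hc
        split_ifs with h <;> simp [h, hc]
      rw [this]
      exact (kobMetric_usc hD c).measurableSet.union
        ((hD.preimage continuous_fst).measurableSet.compl)
  have hcomp : IsCompact (σ '' Icc a b) := isCompact_Icc.image_of_continuousOn hσ
  obtain ⟨ε, hε, hth⟩ := hcomp.exists_thickening_subset_open hD
    (by rintro _ ⟨w, hw, rfl⟩; exact hm hw)
  have hbound : ∀ t ∈ Icc a b, kobMetric D (σ t) (g t) ≤ ‖g t‖ / ε := by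
    intro t ht
    apply kobMetric_le_div hε
    refine Subset.trans ?_ hth
    exact ball_subset_thickening (mem_image_of_mem _ ht) ε
  have hsm : AEMeasurable (fun t => H (σ t, g t)) (volume.restrict (Icc a b)) :=
    hmeas.comp_aemeasurable ((hσ.aemeasurable measurableSet_Icc).prodMk
      hg.aestronglyMeasurable.aemeasurable)
  have hsm' : AEStronglyMeasurable (fun t => kobMetric D (σ t) (g t))
      (volume.restrict (Icc a b)) := by
    refine (hsm.congr ?_).aestronglyMeasurable
    filter_upwards [ae_restrict_mem measurableSet_Icc] with t ht
    simp [hH, hm ht]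
  refine Integrable.mono' (hg.norm.div_const ε) hsm' ?_
  filter_upwards [ae_restrict_mem measurableSet_Icc] with t ht
  rw [Real.norm_of_nonneg (kobMetric_nonneg _ _ _)]
  exact hbound t ht

end KobMetricLemmas

section KobDistLemmas

variable {E : Type*} [NormedAddCommGroup E] [NormedSpace ℂ E]

/-- An absolutely continuous curve in `D`. -/
structure KCurve (D : Set E) (σ g : ℝ → E) (a b : ℝ) : Prop where
  le : a ≤ b
  ac : IsACWithDeriv σ g a b
  maps : MapsTo σ (Icc a b) D

/-- The set of lengths of curves joining two points. -/
def lenSet (D : Set E) (x y : E) : Set ℝ :=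
  { r : ℝ | ∃ (a b : ℝ) (σ g : ℝ → E), a ≤ b ∧
    IsACWithDeriv σ g a b ∧ MapsTo σ (Icc a b) D ∧ σ a = x ∧ σ b = y ∧
    r = ∫ t in a..b, kobMetric D (σ t) (g t) }

lemma lenSet_nonneg {D : Set E} {x y : E} {r : ℝ} (h : r ∈ lenSet D x y) : 0 ≤ r := by
  obtain ⟨a, b, σ, g, hab, -, -, -, -, rfl⟩ := h
  exact intervalIntegral.integral_nonneg hab fun t _ => kobMetric_nonneg _ _ _

lemma lenSet_bddBelow (D : Set E) (x y : E) : BddBelow (lenSet D x y) :=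
  ⟨0, fun _ h => lenSet_nonneg h⟩

lemma kobDist_nonneg (D : Set E) (x y : E) : 0 ≤ kobDist D x y :=
  Real.sInf_nonneg fun _ h => lenSet_nonneg h

lemma kobDist_le_of_mem {D : Set E} {x y : E} {r : ℝ} (h : r ∈ lenSet D x y) :
    kobDist D x y ≤ r := csInf_le (lenSet_bddBelow D x y) h

lemma KCurve.mem_lenSet {D : Set E} {σ g : ℝ → E} {a b : ℝ} (h : KCurve D σ g a b) :
    (∫ t in a..b, kobMetric D (σ t) (g t)) ∈ lenSet D (σ a) (σ b) :=
  ⟨a, b, σ, g, h.le, h.ac, h.maps, rfl, rfl, rfl⟩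

lemma KCurve.dist_le {D : Set E} {σ g : ℝ → E} {a b : ℝ} (h : KCurve D σ g a b) :
    kobDist D (σ a) (σ b) ≤ ∫ t in a..b, kobMetric D (σ t) (g t) :=
  kobDist_le_of_mem h.mem_lenSet

lemma KCurve.continuousOn {D : Set E} {σ g : ℝ → E} {a b : ℝ}
    (h : KCurve D σ g a b) : ContinuousOn σ (Icc a b) := by
  have h1 : ContinuousOn (fun t => σ a + ∫ s in a..t, g s) (Icc a b) := by
    have := intervalIntegral.continuousOn_primitive_interval' h.ac.1 left_mem_uIcc
    rw [uIcc_of_le h.le] at this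
    exact continuousOn_const.add this
  exact h1.congr h.ac.2

lemma KCurve.sub_eq {D : Set E} {σ g : ℝ → E} {a b c d : ℝ} (h : KCurve D σ g a b)
    (hc : a ≤ c) (hcd : c ≤ d) (hd : d ≤ b) : σ d = σ c + ∫ s in c..d, g s := by
  have hi : ∀ u ∈ Icc a b, ∀ v ∈ Icc a b, IntervalIntegrable g volume u v := by
    intro u hu v hv
    apply h.ac.1.mono_set
    rw [uIcc_of_le h.le]
    exact uIcc_subset_Icc hu hv
  have ha : a ∈ Icc a b := ⟨le_rfl, h.le⟩
  have hc' : c ∈ Icc a b := ⟨hc, hcd.trans hd⟩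
  have hd' : d ∈ Icc a b := ⟨hc.trans hcd, hd⟩
  rw [h.ac.2 d hd', h.ac.2 c hc', add_assoc,
    intervalIntegral.integral_add_adjacent_intervals (hi a ha c hc') (hi c hc' d hd')]

lemma KCurve.sub {D : Set E} {σ g : ℝ → E} {a b c d : ℝ} (h : KCurve D σ g a b)
    (hc : a ≤ c) (hcd : c ≤ d) (hd : d ≤ b) : KCurve D σ g c d where
  le := hcd
  ac := by
    refine ⟨?_, fun t ht => h.sub_eq hc ht.1 (ht.2.trans hd)⟩
    apply h.ac.1.mono_set
    rw [uIcc_of_le h.le, uIcc_of_le hcd]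
    exact Icc_subset_Icc hc hd
  maps := h.maps.mono_left (Icc_subset_Icc hc hd)

lemma KCurve.mono {D D' : Set E} {σ g : ℝ → E} {a b : ℝ} (h : KCurve D σ g a b)
    (hm : MapsTo σ (Icc a b) D') : KCurve D' σ g a b := ⟨h.le, h.ac, hm⟩

lemma KCurve.integrable [ProperSpace E] {D : Set E} (hD : IsOpen D) {σ g : ℝ → E} {a b : ℝ}
    (h : KCurve D σ g a b) :
    IntervalIntegrable (fun t => kobMetric D (σ t) (g t)) volume a b :=
  kobMetric_intervalIntegrable hD h.le h.continuousOn h.maps h.ac.1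

lemma lenSet_symm {D : Set E} {x y : E} {r : ℝ} (h : r ∈ lenSet D x y) : r ∈ lenSet D y x := by
  obtain ⟨a, b, σ, g, hab, hac, hm, rfl, rfl, rfl⟩ := h
  have hk : KCurve D σ g a b := ⟨hab, hac, hm⟩
  refine ⟨-b, -a, fun t => σ (-t), fun t => - g (-t), by linarith, ⟨?_, ?_⟩, ?_, by simp, by simp,
    ?_⟩
  · exact ((IntervalIntegrable.iff_comp_neg).mp hac.1).symm.neg
  · intro t ht
    have h1 := hk.sub_eq (c := -t) (d := b) (by linarith [ht.2]) (by linarith [ht.1]) le_rfl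
    rw [intervalIntegral.integral_neg, intervalIntegral.integral_comp_neg (f := g)]
    simp only [neg_neg]
    rw [h1]; abel
  · intro t ht
    exact hm ⟨by linarith [ht.2], by linarith [ht.1]⟩
  · simp only [kobMetric_neg]
    rw [intervalIntegral.integral_comp_neg (f := fun t => kobMetric D (σ t) (g t))]
    simp

lemma lenSet_trans [ProperSpace E] {D : Set E} (hD : IsOpen D) {x y z : E} {r₁ r₂ : ℝ}
    (h₁ : r₁ ∈ lenSet D x y) (h₂ : r₂ ∈ lenSet D y z) : r₁ + r₂ ∈ lenSet D x z := by
  obtain ⟨a, b, σ, g, hab, hac, hm, rfl, rfl, rfl⟩ := h₁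
  obtain ⟨a', b', σ', g', hab', hac', hm', hy, rfl, rfl⟩ := h₂
  have hk : KCurve D σ g a b := ⟨hab, hac, hm⟩
  have hk' : KCurve D σ' g' a' b' := ⟨hab', hac', hm'⟩
  set e := b + (b' - a') with he
  set c := b - a' with hc
  have hbe : b ≤ e := by linarith
  set S : ℝ → E := fun t => if t ≤ b then σ t else σ' (t - c) with hS
  set G : ℝ → E := fun t => if t ≤ b then g t else g' (t - c) with hG
  have S1 : ∀ t, t ≤ b → S t = σ t := fun t ht => by simp [hS, ht]
  have G1 : ∀ t, t ≤ b → G t = g t := fun t ht => by simp [hG, ht]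
  have S2 : ∀ t, b < t → S t = σ' (t - c) := fun t ht => by simp [hS, not_le.mpr ht]
  have G2 : ∀ t, b < t → G t = g' (t - c) := fun t ht => by simp [hG, not_le.mpr ht]
  have gi1 : IntervalIntegrable G volume a b := by
    refine (intervalIntegrable_congr ?_).mp hac.1
    intro t ht
    rw [uIoc_of_le hab] at ht
    exact (G1 t ht.2).symm
  have gi2 : IntervalIntegrable G volume b e := by
    have h1 := hac'.1.comp_sub_right c
    rw [show a' + c = b by simp [hc], show b' + c = e by simp [hc, he]; ring] at h1
    refine (intervalIntegrable_congr ?_).mp h1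
    intro t ht
    rw [uIoc_of_le hbe] at ht
    exact (G2 t ht.1).symm
  have hac'' : IsACWithDeriv S G a e := by
    refine ⟨gi1.trans gi2, ?_⟩
    intro t ht
    rw [S1 a hab]
    rcases le_or_gt t b with htb | htb
    · rw [S1 t htb, hac.2 t ⟨ht.1, htb⟩]
      congr 1
      apply intervalIntegral.integral_congr
      intro s hs
      rw [uIcc_of_le ht.1] at hs
      exact (G1 s (hs.2.trans htb)).symm
    · have i1 : ∫ s in a..b, G s = ∫ s in a..b, g s := by
        apply intervalIntegral.integral_congr
        intro s hs
        rw [uIcc_of_le hab] at hs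
        exact G1 s hs.2
      have i2 : ∫ s in b..t, G s = ∫ s in b..t, g' (s - c) := by
        apply intervalIntegral.integral_congr_Ioo_of_le htb.le
        intro s hs
        exact G2 s hs.1
      have gi2' : IntervalIntegrable G volume b t := by
        apply gi2.mono_set
        rw [uIcc_of_le htb.le, uIcc_of_le hbe]
        exact Icc_subset_Icc le_rfl ht.2
      rw [← intervalIntegral.integral_add_adjacent_intervals gi1 gi2', i1, i2,
        intervalIntegral.integral_comp_sub_right (f := g'), S2 t htb,
        hac'.2 (t - c) ⟨by linarith, by linarith [ht.2]⟩, hy, hac.2 b ⟨hab, le_rfl⟩,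
        show b - c = a' by simp [hc], add_assoc]
  have hmap : MapsTo S (Icc a e) D := by
    intro t ht
    rcases le_or_gt t b with htb | htb
    · rw [S1 t htb]; exact hm ⟨ht.1, htb⟩
    · rw [S2 t htb]; exact hm' ⟨by linarith, by linarith [ht.2]⟩
  have hK : KCurve D S G a e := ⟨hab.trans hbe, hac'', hmap⟩
  have SE : S e = σ' b' := by
    rcases hbe.eq_or_lt with h | h
    · have : b' = a' := by linarith
      rw [← h, S1 b le_rfl, this, hy]
    · rw [S2 e h]; congr 1; linarith
  refine ⟨a, e, S, G, hab.trans hbe, hac'', hmap, S1 a hab, SE, ?_⟩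
  have k1 := (hK.sub le_rfl hab hbe).integrable hD
  have k2 := (hK.sub hab hbe le_rfl).integrable hD
  rw [← intervalIntegral.integral_add_adjacent_intervals k1 k2]
  congr 1
  · apply intervalIntegral.integral_congr
    intro s hs
    rw [uIcc_of_le hab] at hs
    simp only [S1 s hs.2, G1 s hs.2]
  · have : ∫ t in b..e, kobMetric D (S t) (G t)
        = ∫ t in b..e, kobMetric D (σ' (t - c)) (g' (t - c)) := by
      apply intervalIntegral.integral_congr_Ioo_of_le hbe
      intro s hs
      simp only [S2 s hs.1, G2 s hs.1]
    rw [this, intervalIntegral.integral_comp_sub_right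
      (f := fun t => kobMetric D (σ' t) (g' t))]
    congr 1
    · simp [hc]
    · simp [hc, he]

lemma segCurve [ProperSpace E] {D : Set E} {x y : E} (h : segment ℝ x y ⊆ D) :
    KCurve D (fun t : ℝ => x + t • (y - x)) (fun _ => y - x) 0 1 where
  le := zero_le_one
  ac := by
    refine ⟨intervalIntegrable_const, fun t ht => ?_⟩
    simp only [zero_smul, add_zero, intervalIntegral.integral_const, sub_zero]
  maps := by
    intro t ht
    apply h
    rw [segment_eq_image']
    exact ⟨t, ht, rfl⟩

lemma lenSet_nonempty [ProperSpace E] {D : Set E} (hD : IsOpen D) (hc : IsPreconnected D)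
    {x y : E} (hx : x ∈ D) (hy : y ∈ D) : (lenSet D x y).Nonempty := by
  refine hc.induction₂ (fun x y => (lenSet D x y).Nonempty) ?_ ?_ ?_ hx hy
  · intro z hz
    obtain ⟨ρ, hρ, hb⟩ := Metric.isOpen_iff.mp hD z hz
    filter_upwards [mem_nhdsWithin_of_mem_nhds (ball_mem_nhds z hρ)] with w hw
    have hs : segment ℝ z w ⊆ D :=
      ((convex_ball z ρ).segment_subset (mem_ball_self hρ) hw).trans hb
    have := (segCurve hs).mem_lenSet
    simp only [zero_smul, one_smul, add_zero, add_sub_cancel] at this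
    exact ⟨_, this⟩
  · rintro u v w - - - ⟨r, hr⟩ ⟨r', hr'⟩
    exact ⟨_, lenSet_trans hD hr hr'⟩
  · rintro u v - - ⟨r, hr⟩
    exact ⟨_, lenSet_symm hr⟩

lemma kobDist_comm (D : Set E) (x y : E) : kobDist D x y = kobDist D y x := by
  have : lenSet D x y = lenSet D y x := by
    ext r; exact ⟨lenSet_symm, lenSet_symm⟩
  exact congrArg sInf this

lemma exists_lenSet_lt [ProperSpace E] {D : Set E} (hD : IsOpen D) (hc : IsPreconnected D)
    {x y : E} (hx : x ∈ D) (hy : y ∈ D) {ε : ℝ} (hε : 0 < ε) :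
    ∃ r ∈ lenSet D x y, r < kobDist D x y + ε :=
  exists_lt_of_csInf_lt (lenSet_nonempty hD hc hx hy) (lt_add_of_pos_right (kobDist D x y) hε)

lemma kobDist_triangle [ProperSpace E] {D : Set E} (hD : IsOpen D) (hc : IsPreconnected D)
    {x y z : E} (hx : x ∈ D) (hy : y ∈ D) (hz : z ∈ D) :
    kobDist D x z ≤ kobDist D x y + kobDist D y z := by
  apply le_of_forall_pos_le_add
  intro ε hε
  obtain ⟨r, hr, h1⟩ := exists_lenSet_lt hD hc hx hy (half_pos hε)
  obtain ⟨r', hr', h2⟩ := exists_lenSet_lt hD hc hy hz (half_pos hε)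
  have := kobDist_le_of_mem (lenSet_trans hD hr hr')
  linarith

lemma kobDist_mono [ProperSpace E] {D D' : Set E} (hD : IsOpen D) (hc : IsPreconnected D)
    (hD' : IsOpen D') (h : D ⊆ D') {x y : E} (hx : x ∈ D) (hy : y ∈ D) :
    kobDist D' x y ≤ kobDist D x y := by
  apply le_csInf (lenSet_nonempty hD hc hx hy)
  rintro r ⟨a, b, σ, g, hab, hac, hm, rfl, rfl, rfl⟩
  have hk : KCurve D σ g a b := ⟨hab, hac, hm⟩
  have hk' : KCurve D' σ g a b := hk.mono (hm.mono_right h)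
  refine hk'.dist_le.trans ?_
  apply intervalIntegral.integral_mono_on hab (hk'.integrable hD') (hk.integrable hD)
  intro t ht
  exact kobMetric_mono hD h (hm ht) _

/-- A curve whose length is within `1` of the Kobayashi distance of its end points. -/
structure NearGeo (D : Set E) (σ g : ℝ → E) (a b : ℝ) : Prop extends KCurve D σ g a b where
  near : ∫ t in a..b, kobMetric D (σ t) (g t) ≤ kobDist D (σ a) (σ b) + 1

lemma exists_nearGeo [ProperSpace E] {D : Set E} (hD : IsOpen D) (hc : IsPreconnected D)
    {x y : E} (hx : x ∈ D) (hy : y ∈ D) :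
    ∃ (σ g : ℝ → E) (a b : ℝ), NearGeo D σ g a b ∧ σ a = x ∧ σ b = y := by
  obtain ⟨r, ⟨a, b, σ, g, hab, hac, hm, rfl, rfl, rfl⟩, h1⟩ :=
    exists_lenSet_lt hD hc hx hy one_pos
  exact ⟨σ, g, a, b, ⟨⟨hab, hac, hm⟩, h1.le⟩, rfl, rfl⟩

lemma NearGeo.sub_near [ProperSpace E] {D : Set E} (hD : IsOpen D) (hcon : IsPreconnected D)
    {σ g : ℝ → E} {a b c d : ℝ} (h : NearGeo D σ g a b)
    (hc : a ≤ c) (hcd : c ≤ d) (hd : d ≤ b) :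
    ∫ t in c..d, kobMetric D (σ t) (g t) ≤ kobDist D (σ c) (σ d) + 1 := by
  have k1 := h.toKCurve.sub le_rfl hc (hcd.trans hd)
  have k2 := h.toKCurve.sub hc hcd hd
  have k3 := h.toKCurve.sub (hc.trans hcd) hd le_rfl
  have e1 := intervalIntegral.integral_add_adjacent_intervals (k1.integrable hD) (k2.integrable hD)
  have e2 := intervalIntegral.integral_add_adjacent_intervals
    ((k1.integrable hD).trans (k2.integrable hD)) (k3.integrable hD)
  have hm := h.maps
  have ha : σ a ∈ D := hm ⟨le_rfl, h.le⟩
  have hb : σ b ∈ D := hm ⟨h.le, le_rfl⟩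
  have hc' : σ c ∈ D := hm ⟨hc, hcd.trans hd⟩
  have hd' : σ d ∈ D := hm ⟨hc.trans hcd, hd⟩
  have t1 := kobDist_triangle hD hcon ha hc' hb
  have t2 := kobDist_triangle hD hcon hc' hd' hb
  linarith [h.near, k1.dist_le, k3.dist_le]

lemma NearGeo.sub [ProperSpace E] {D : Set E} (hD : IsOpen D) (hcon : IsPreconnected D)
    {σ g : ℝ → E} {a b c d : ℝ} (h : NearGeo D σ g a b)
    (hc : a ≤ c) (hcd : c ≤ d) (hd : d ≤ b) : NearGeo D σ g c d :=
  ⟨h.toKCurve.sub hc hcd hd, h.sub_near hD hcon hc hcd hd⟩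

end KobDistLemmas

section ChangeVar

lemma ac_comp_lipschitz {S Φ : ℝ → ℝ} {c d : ℝ} {K : NNReal} {s : Set ℝ}
    (hS : AbsolutelyContinuousOnInterval S c d) (hmap : MapsTo S (uIcc c d) s)
    (hΦ : LipschitzOnWith K Φ s) : AbsolutelyContinuousOnInterval (fun t => Φ (S t)) c d := by
  rw [absolutelyContinuousOnInterval_iff] at hS ⊢
  intro ε hε
  obtain ⟨δ, hδ, h⟩ := hS (ε / (K + 1)) (by positivity)
  refine ⟨δ, hδ, fun E hE hlen => ?_⟩
  have h1 := h E hE hlen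
  have h2 : ∀ i ∈ Finset.range E.1, dist (Φ (S (E.2 i).1)) (Φ (S (E.2 i).2))
      ≤ K * dist (S (E.2 i).1) (S (E.2 i).2) := by
    intro i hi
    have := hE.1 i hi
    exact hΦ.dist_le_mul _ (hmap this.1) _ (hmap this.2)
  calc _ ≤ ∑ i ∈ Finset.range E.1, K * dist (S (E.2 i).1) (S (E.2 i).2) := Finset.sum_le_sum h2
    _ = K * ∑ i ∈ Finset.range E.1, dist (S (E.2 i).1) (S (E.2 i).2) := by rw [Finset.mul_sum]
    _ ≤ (K + 1) * ∑ i ∈ Finset.range E.1, dist (S (E.2 i).1) (S (E.2 i).2) := by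
        have : 0 ≤ ∑ i ∈ Finset.range E.1, dist (S (E.2 i).1) (S (E.2 i).2) :=
          Finset.sum_nonneg fun _ _ => dist_nonneg
        nlinarith
    _ < (K + 1) * (ε / (K + 1)) := by gcongr
    _ = ε := by field_simp

lemma cv_half {k φ Φ : ℝ → ℝ} {c d : ℝ} (hcd : c ≤ d) (hk : IntervalIntegrable k volume c d)
    (hk0 : ∀ t, 0 ≤ k t) (hΦ : ∀ u, 0 ≤ u → HasDerivAt Φ (φ u) u)
    (hφ : ContinuousOn φ (Ici 0)) :
    ∫ t in c..d, φ (∫ s in c..t, k s) * k t = Φ (∫ s in c..d, k s) - Φ 0 := by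
  set S : ℝ → ℝ := fun t => ∫ s in c..t, k s with hS
  have hAC : AbsolutelyContinuousOnInterval S c d :=
    hk.absolutelyContinuousOnInterval_intervalIntegral left_mem_uIcc
  have hsub : ∀ t ∈ Icc c d, IntervalIntegrable k volume c t ∧ IntervalIntegrable k volume t d := by
    intro t ht
    constructor <;> apply hk.mono_set <;> rw [uIcc_of_le hcd]
    · exact uIcc_subset_Icc ⟨le_rfl, hcd⟩ ht
    · exact uIcc_subset_Icc ht ⟨hcd, le_rfl⟩
  have hSm : MapsTo S (uIcc c d) (Icc 0 (S d)) := by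
    intro t ht
    rw [uIcc_of_le hcd] at ht
    refine ⟨intervalIntegral.integral_nonneg ht.1 fun s _ => hk0 s, ?_⟩
    have := intervalIntegral.integral_add_adjacent_intervals (hsub t ht).1 (hsub t ht).2
    have h2 := intervalIntegral.integral_nonneg ht.2 (μ := volume) fun s _ => hk0 s
    simp only [hS]; linarith
  obtain ⟨B, hB⟩ := (isCompact_Icc (a := (0:ℝ)) (b := S d)).exists_bound_of_continuousOn
    (hφ.mono fun x hx => hx.1)
  have hlip : LipschitzOnWith (Real.toNNReal B) Φ (Icc 0 (S d)) := by
    apply (convex_Icc (0:ℝ) (S d)).lipschitzOnWith_of_nnnorm_hasDerivWithin_le (f' := φ)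
    · intro x hx; exact (hΦ x hx.1).hasDerivWithinAt
    · intro x hx
      rw [← NNReal.coe_le_coe, coe_nnnorm, Real.coe_toNNReal']
      exact (hB x hx).trans (le_max_left _ _)
  have hAC2 := ac_comp_lipschitz hAC hSm hlip
  have e1 := hAC2.integral_deriv_eq_sub
  have e2 : ∫ t in c..d, deriv (fun t => Φ (S t)) t = ∫ t in c..d, φ (S t) * k t := by
    apply intervalIntegral.integral_congr_ae
    filter_upwards [hk.ae_hasDerivAt_integral] with t ht htm
    have htm' : t ∈ uIcc c d := uIoc_subset_uIcc htm
    have h1 : HasDerivAt S (k t) t := ht htm' c left_mem_uIcc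
    exact ((hΦ (S t) (hSm htm').1).comp t h1).deriv
  rw [← e2, e1]
  simp [hS]

lemma cv_full {k φ Φ : ℝ → ℝ} {c d t₀ T : ℝ} (ht₀ : t₀ ∈ Icc c d)
    (hk : IntervalIntegrable k volume c d)
    (hk0 : ∀ t, 0 ≤ k t) (hΦ : ∀ u, 0 ≤ u → HasDerivAt Φ (φ u) u)
    (hφ : ContinuousOn φ (Ici 0)) (hT : ∀ u, 0 ≤ u → Φ u - Φ 0 ≤ T) :
    IntervalIntegrable (fun t => φ |∫ s in t₀..t, k s| * k t) volume c d ∧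
    ∫ t in c..d, φ |∫ s in t₀..t, k s| * k t ≤ 2 * T := by
  have hcd : c ≤ d := ht₀.1.trans ht₀.2
  have hI : IntervalIntegrable (fun t => φ |∫ s in t₀..t, k s| * k t) volume c d := by
    apply hk.continuousOn_mul
    have h1 : ContinuousOn (fun t => ∫ s in t₀..t, k s) (uIcc c d) :=
      intervalIntegral.continuousOn_primitive_interval' hk (by rwa [uIcc_of_le hcd])
    exact hφ.comp h1.abs fun t _ => mem_Ici.mpr (abs_nonneg _)
  refine ⟨hI, ?_⟩
  have i1 : IntervalIntegrable k volume c t₀ := hk.mono_set (by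
    rw [uIcc_of_le hcd, uIcc_of_le ht₀.1]; exact Icc_subset_Icc le_rfl ht₀.2)
  have i2 : IntervalIntegrable k volume t₀ d := hk.mono_set (by
    rw [uIcc_of_le hcd, uIcc_of_le ht₀.2]; exact Icc_subset_Icc ht₀.1 le_rfl)
  have j1 := hI.mono_set (show uIcc c t₀ ⊆ uIcc c d by
    rw [uIcc_of_le hcd, uIcc_of_le ht₀.1]; exact Icc_subset_Icc le_rfl ht₀.2)
  have j2 := hI.mono_set (show uIcc t₀ d ⊆ uIcc c d by
    rw [uIcc_of_le hcd, uIcc_of_le ht₀.2]; exact Icc_subset_Icc ht₀.1 le_rfl)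
  rw [← intervalIntegral.integral_add_adjacent_intervals j1 j2]
  have r2 : ∫ t in t₀..d, φ |∫ s in t₀..t, k s| * k t ≤ T := by
    have : ∫ t in t₀..d, φ |∫ s in t₀..t, k s| * k t
        = ∫ t in t₀..d, φ (∫ s in t₀..t, k s) * k t := by
      apply intervalIntegral.integral_congr
      intro t ht
      rw [uIcc_of_le ht₀.2] at ht
      simp only
      rw [abs_of_nonneg (intervalIntegral.integral_nonneg ht.1 fun s _ => hk0 s)]
    rw [this, cv_half ht₀.2 i2 hk0 hΦ hφ]
    exact hT _ (intervalIntegral.integral_nonneg ht₀.2 fun s _ => hk0 s)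
  have r1 : ∫ t in c..t₀, φ |∫ s in t₀..t, k s| * k t ≤ T := by
    have : ∫ t in c..t₀, φ |∫ s in t₀..t, k s| * k t
        = ∫ t in (-t₀)..(-c), φ (∫ s in (-t₀)..t, k (-s)) * k (-t) := by
      rw [← intervalIntegral.integral_comp_neg
        (f := fun t => φ (∫ s in (-t₀)..t, k (-s)) * k (-t))]
      apply intervalIntegral.integral_congr
      intro t ht
      rw [uIcc_of_le ht₀.1] at ht
      simp only [neg_neg]
      rw [intervalIntegral.integral_comp_neg (f := k), neg_neg, neg_neg,
        intervalIntegral.integral_symm, abs_neg,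
        abs_of_nonneg (intervalIntegral.integral_nonneg ht.2 fun s _ => hk0 s)]
    rw [this, cv_half (k := fun t => k (-t)) (neg_le_neg ht₀.1)
      ((IntervalIntegrable.iff_comp_neg).mp i1).symm (fun t => hk0 _) hΦ hφ]
    exact hT _ (intervalIntegral.integral_nonneg (neg_le_neg ht₀.1) fun s _ => hk0 _)
  linarith

end ChangeVar

section Geom

variable {E : Type*} [NormedAddCommGroup E] [NormedSpace ℂ E]

lemma subset_of_frontier_disjoint {X : Type*} [TopologicalSpace X] {D T : Set X} (hD : IsOpen D)
    (hT : IsPreconnected T) (hne : (T ∩ D).Nonempty) (hfr : ∀ x ∈ T, x ∉ frontier D) : T ⊆ D := by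
  refine IsPreconnected.subset_left_of_subset_union hD (isClosed_closure (s := D)).isOpen_compl
    ?_ ?_ hne hT
  · exact disjoint_compl_right.mono_left subset_closure
  · intro x hx
    by_cases h : x ∈ closure D
    · left
      by_contra hxD
      exact hfr x hx ⟨h, by rwa [hD.interior_eq]⟩
    · exact Or.inr h

lemma ball_bdist_subset {D : Set E} (hD : IsOpen D) {z : E} (hz : z ∈ D) :
    ball z (bdist D z) ⊆ D := by
  by_cases h : 0 < bdist D z
  · refine subset_of_frontier_disjoint hD (convex_ball z _).isPreconnected
      ⟨z, mem_ball_self h, hz⟩ ?_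
    intro x hx hxf
    have := infDist_le_dist_of_mem (x := z) hxf
    rw [mem_ball, dist_comm] at hx
    unfold bdist at hx
    linarith
  · rw [ball_eq_empty.mpr (not_lt.mp h)]
    exact empty_subset _

lemma bounded_ne_univ [Nontrivial E] {D : Set E} (hb : Bornology.IsBounded D) : D ≠ univ := by
  intro h
  rw [h] at hb
  exact NormedSpace.unbounded_univ ℂ E hb

lemma bdist_pos [Nontrivial E] {D : Set E} (hD : IsOpen D) (hb : Bornology.IsBounded D)
    {z : E} (hz : z ∈ D) : 0 < bdist D z := by
  have hne : (frontier D).Nonempty := nonempty_frontier_iff.mpr ⟨⟨z, hz⟩, bounded_ne_univ hb⟩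
  refine (isClosed_frontier.notMem_iff_infDist_pos hne).mp ?_
  intro h
  rw [hD.frontier_eq] at h
  exact h.2 hz

lemma frontier_line_nonempty {D : Set E} (hD : IsOpen D) (hb : Bornology.IsBounded D)
    {z : E} (hz : z ∈ D) {v : E} (hv : v ≠ 0) :
    (frontier D ∩ {w | ∃ c : ℂ, w = z + c • v}).Nonempty := by
  by_contra hne
  have hT : IsPreconnected (range fun c : ℂ => z + c • v) :=
    isPreconnected_range (by fun_prop)
  have hsub : (range fun c : ℂ => z + c • v) ⊆ D := by
    refine subset_of_frontier_disjoint hD hT ⟨z, ⟨0, by simp⟩, hz⟩ ?_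
    rintro x ⟨c, rfl⟩ hx
    exact hne ⟨_, hx, c, rfl⟩
  obtain ⟨R, hR⟩ := hb.subset_closedBall z
  have hv' : 0 < ‖v‖ := norm_pos_iff.mpr hv
  have h1 := hR (hsub ⟨(((|R| + 1) / ‖v‖ : ℝ) : ℂ), rfl⟩)
  rw [mem_closedBall, dist_eq_norm] at h1
  simp only [add_sub_cancel_left, norm_smul, Complex.norm_real, Real.norm_eq_abs] at h1
  rw [abs_of_nonneg (by positivity), div_mul_cancel₀ _ hv'.ne'] at h1
  linarith [le_abs_self R]

/-- Distance along an analytic disc. -/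
lemma kobDist_disc [ProperSpace E] {Ω : Set E} {f : ℂ → E}
    (hΩ : IsOpen Ω)
    (hf : DifferentiableOn ℂ f (ball (0:ℂ) 1)) (hm : MapsTo f (ball (0:ℂ) 1) Ω)
    {ζ : ℂ} (hζ : ‖ζ‖ < 1) : kobDist Ω (f 0) (f ζ) ≤ -Real.log (1 - ‖ζ‖) := by
  have hmem : ∀ t ∈ Icc (0:ℝ) 1, (t : ℂ) * ζ ∈ ball (0:ℂ) 1 := by
    intro t ht
    simp only [mem_ball_zero_iff, norm_mul, Complex.norm_real, Real.norm_eq_abs, abs_of_nonneg ht.1]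
    nlinarith [ht.2, norm_nonneg ζ]
  have hder : ∀ w ∈ ball (0:ℂ) 1, HasDerivAt f (deriv f w) w := fun w hw =>
    (hf.differentiableAt (isOpen_ball.mem_nhds hw)).hasDerivAt
  have hcont : ContinuousOn (fun t : ℝ => ζ • deriv f ((t:ℂ) * ζ)) (Icc 0 1) := by
    have h1 : ContinuousOn (deriv f) (ball (0:ℂ) 1) :=
      (hf.deriv isOpen_ball).continuousOn
    refine ContinuousOn.const_smul (h1.comp ?_ hmem) ζ
    fun_prop
  have hσd : ∀ t ∈ Icc (0:ℝ) 1, HasDerivAt (fun t : ℝ => f ((t:ℂ) * ζ))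
      (ζ • deriv f ((t:ℂ) * ζ)) t := by
    intro t ht
    have h2 : HasDerivAt (fun s : ℝ => (s:ℂ) * ζ) ζ t := by
      simpa using (Complex.ofRealCLM.hasDerivAt (x := t)).mul_const ζ
    exact (hder _ (hmem t ht)).scomp t h2
  have hIntg : ∀ t ∈ Icc (0:ℝ) 1,
      IntervalIntegrable (fun t : ℝ => ζ • deriv f ((t:ℂ) * ζ)) volume 0 t := by
    intro t ht
    apply ContinuousOn.intervalIntegrable
    rw [uIcc_of_le ht.1]
    exact hcont.mono (Icc_subset_Icc le_rfl ht.2)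
  have hK : KCurve Ω (fun t : ℝ => f ((t:ℂ) * ζ)) (fun t : ℝ => ζ • deriv f ((t:ℂ) * ζ)) 0 1 := by
    refine ⟨zero_le_one, ⟨hIntg 1 (by simp), ?_⟩, fun t ht => hm (hmem t ht)⟩
    intro t ht
    have hft := intervalIntegral.integral_eq_sub_of_hasDerivAt
      (f := fun t : ℝ => f ((t:ℂ) * ζ)) (a := 0) (b := t) (fun s hs => by
        rw [uIcc_of_le ht.1] at hs
        exact hσd s ⟨hs.1, hs.2.trans ht.2⟩) (hIntg t ht)
    simp [hft]
  have hpos : ∀ t ∈ Icc (0:ℝ) 1, 0 < 1 - t * ‖ζ‖ := by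
    intro t ht
    nlinarith [ht.1, ht.2, norm_nonneg ζ]
  have hkob : ∀ t ∈ Icc (0:ℝ) 1, kobMetric Ω (f ((t:ℂ) * ζ)) (ζ • deriv f ((t:ℂ) * ζ)) ≤
      ‖ζ‖ / (1 - t * ‖ζ‖) := by
    intro t ht
    set ρ : ℝ := 1 - t * ‖ζ‖ with hρ
    have hρ0 : 0 < ρ := hpos t ht
    have hin : ∀ w ∈ ball (0:ℂ) 1, (t:ℂ) * ζ + (ρ:ℂ) * w ∈ ball (0:ℂ) 1 := by
      intro w hw
      rw [mem_ball_zero_iff] at hw ⊢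
      calc ‖(t:ℂ) * ζ + (ρ:ℂ) * w‖ ≤ ‖(t:ℂ) * ζ‖ + ‖(ρ:ℂ) * w‖ := norm_add_le _ _
        _ = t * ‖ζ‖ + ρ * ‖w‖ := by
          simp [abs_of_nonneg ht.1, abs_of_pos hρ0]
        _ < t * ‖ζ‖ + ρ * 1 := by gcongr
        _ = 1 := by rw [hρ]; ring
    have hk := kobMetric_le (D := Ω) (x := f ((t:ℂ) * ζ)) (v := ζ • deriv f ((t:ℂ) * ζ))
      (fun w => f ((t:ℂ) * ζ + (ρ:ℂ) * w)) (ζ / ρ) ((ρ:ℂ) • deriv f ((t:ℂ) * ζ)) ?_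
      (fun w hw => hm (hin w hw)) (by simp) ?_ ?_
    · simpa [abs_of_pos hρ0] using hk
    · exact hf.comp (by fun_prop) hin
    · have h2 : HasDerivAt (fun w : ℂ => (t:ℂ) * ζ + (ρ:ℂ) * w) (ρ:ℂ) 0 := by
        simpa using ((hasDerivAt_id (0:ℂ)).const_mul (ρ:ℂ)).const_add ((t:ℂ) * ζ)
      have h3 : HasDerivAt f (deriv f ((t:ℂ) * ζ)) ((t:ℂ) * ζ + (ρ:ℂ) * 0) := by
        simpa using hder _ (hmem t ht)
      exact h3.scomp (0:ℂ) h2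
    · rw [smul_smul, div_mul_cancel₀]
      exact_mod_cast hρ0.ne'
  have hd2 : ∀ t ∈ uIcc (0:ℝ) 1, HasDerivAt (fun t : ℝ => -Real.log (1 - t * ‖ζ‖))
      (‖ζ‖ / (1 - t * ‖ζ‖)) t := by
    intro t ht
    rw [uIcc_of_le zero_le_one] at ht
    have h1 : HasDerivAt (fun t : ℝ => 1 - t * ‖ζ‖) (-‖ζ‖) t := by
      simpa using ((hasDerivAt_id t).mul_const ‖ζ‖).const_sub 1
    have h2 := (h1.log (hpos t ht).ne').neg
    have e : ‖ζ‖ / (1 - t * ‖ζ‖) = -(-‖ζ‖ / (1 - t * ‖ζ‖)) := by ring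
    rw [e]
    exact h2
  have hi2 : IntervalIntegrable (fun t : ℝ => ‖ζ‖ / (1 - t * ‖ζ‖)) volume 0 1 := by
    apply ContinuousOn.intervalIntegrable
    rw [uIcc_of_le zero_le_one]
    refine ContinuousOn.div continuousOn_const (by fun_prop) fun t ht => (hpos t ht).ne'
  calc kobDist Ω (f 0) (f ζ)
      ≤ ∫ t in (0:ℝ)..1, kobMetric Ω (f ((t:ℂ) * ζ)) (ζ • deriv f ((t:ℂ) * ζ)) := by
        simpa using hK.dist_le
    _ ≤ ∫ t in (0:ℝ)..1, ‖ζ‖ / (1 - t * ‖ζ‖) :=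
        intervalIntegral.integral_mono_on zero_le_one (hK.integrable hΩ) hi2 hkob
    _ = -Real.log (1 - ‖ζ‖) := by
        rw [intervalIntegral.integral_eq_sub_of_hasDerivAt hd2 hi2]
        simp

/-- Lower bound of the Kobayashi metric on convex domains. -/
lemma convex_lower {D : Set E} (hD : IsOpen D) (hc : Convex ℝ D) (hb : Bornology.IsBounded D)
    {z : E} (hz : z ∈ D) {v : E} (hv : v ≠ 0) :
    ‖v‖ ≤ 4 * bdistDir D z v * kobMetric D z v := by
  have hv' : 0 < ‖v‖ := norm_pos_iff.mpr hv
  have key : ∀ ξ ∈ frontier D ∩ {w | ∃ c : ℂ, w = z + c • v}, ∀ r ∈ kobSet D z v,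
      ‖v‖ ≤ 4 * dist z ξ * r := by
    rintro ξ ⟨hξ, c, rfl⟩ r ⟨f, η, hf, hm, h0, hfv, rfl⟩
    rw [derivWithin_ball_zero] at hfv
    have hξD : z + c • v ∉ D := by
      rw [hD.frontier_eq] at hξ
      exact hξ.2
    obtain ⟨l, hl⟩ := RCLike.geometric_hahn_banach_open_point (𝕜 := ℂ) hc hD hξD
    set M : ℝ := (l (c • v)).re with hM
    have hMpos : 0 < M := by
      have := hl z hz
      simp only [map_add, RCLike.re_to_complex, Complex.add_re] at this
      linarith
    set h : ℂ → ℂ := fun w => l (f w) - l z with hh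
    have hdiff : DifferentiableOn ℂ h (ball (0:ℂ) 1) :=
      (l.differentiable.comp_differentiableOn hf).sub_const _
    have hre : MapsTo h (ball (0:ℂ) 1) {w | w.re ≤ M} := by
      intro w hw
      have := hl _ (hm hw)
      simp only [map_add, RCLike.re_to_complex, Complex.add_re] at this
      simp only [mem_ofPred_eq, hh, Complex.sub_re]
      linarith
    have hh0 : h 0 = 0 := by simp [hh, h0]
    have hmap : MapsTo h (ball (0:ℂ) (1/2)) (closedBall (h 0) (2 * M)) := by
      intro w hw
      rw [mem_ball_zero_iff] at hw
      have := Complex.borelCaratheodory_zero hMpos hdiff hre one_pos (z := w)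
        (by rw [mem_ball_zero_iff]; linarith) hh0
      rw [hh0, mem_closedBall_zero_iff]
      refine this.trans ?_
      rw [div_le_iff₀ (by linarith)]
      nlinarith
    have hder := Complex.norm_deriv_le_div_of_mapsTo_ball
      (hdiff.mono (ball_subset_ball (by norm_num))) hmap (by norm_num)
    have hdl : deriv h 0 = l (deriv f 0) := by
      have h1 : HasDerivAt f (deriv f 0) 0 :=
        (hf.differentiableAt (isOpen_ball.mem_nhds (by simp))).hasDerivAt
      exact ((l.hasFDerivAt.comp_hasDerivAt (0:ℂ) h1).sub_const _).deriv
    rw [hdl] at hder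
    have h4 : ‖l v‖ ≤ ‖η‖ * (4 * M) := by
      rw [← hfv, map_smul, norm_smul]
      gcongr
      linarith
    have h5 : M ≤ ‖c‖ * ‖l v‖ := by
      calc M ≤ ‖l (c • v)‖ := Complex.re_le_norm _
        _ = _ := by rw [map_smul, norm_smul]
    have h6 : 0 < ‖l v‖ := by
      by_contra hneg
      have : ‖l v‖ = 0 := le_antisymm (not_lt.mp hneg) (norm_nonneg _)
      rw [this, mul_zero] at h5
      linarith
    have h7 : 1 ≤ 4 * ‖c‖ * ‖η‖ := by
      have h8 : ‖l v‖ * 1 ≤ ‖l v‖ * (4 * ‖c‖ * ‖η‖) := by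
        calc ‖l v‖ * 1 ≤ ‖η‖ * (4 * M) := by simpa using h4
          _ ≤ ‖η‖ * (4 * (‖c‖ * ‖l v‖)) := by gcongr
          _ = _ := by ring
      exact le_of_mul_le_mul_left h8 h6
    have h9 : dist z (z + c • v) = ‖c‖ * ‖v‖ := by
      rw [dist_self_add_right, norm_smul]
    rw [h9]
    nlinarith
  have hne := frontier_line_nonempty hD hb hz hv
  have step : ∀ r ∈ kobSet D z v, ‖v‖ ≤ 4 * bdistDir D z v * r := by
    intro r hr
    obtain ⟨ξ, hξ⟩ := hne
    have hr0 : 0 < r := by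
      have h1 := key ξ hξ r hr
      by_contra hneg
      have : 4 * dist z ξ * r ≤ 0 :=
        mul_nonpos_of_nonneg_of_nonpos (by positivity) (not_lt.mp hneg)
      linarith
    have h2 : ‖v‖ / (4 * r) ≤ bdistDir D z v := by
      refine (le_infDist ⟨ξ, hξ⟩).mpr ?_
      intro y hy
      rw [div_le_iff₀ (by positivity)]
      linarith [key y hy r hr]
    rw [div_le_iff₀ (by positivity)] at h2
    linarith
  have hb0 : 0 < bdistDir D z v := by
    obtain ⟨r, hr⟩ := kobSet_nonempty hD hz v
    have h1 := step r hr
    have h0 : 0 ≤ bdistDir D z v := infDist_nonneg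
    rcases h0.lt_or_eq with h | h
    · exact h
    · rw [← h] at h1
      simp only [mul_zero, zero_mul] at h1
      linarith
  have h3 : ‖v‖ / (4 * bdistDir D z v) ≤ kobMetric D z v := by
    apply le_csInf (kobSet_nonempty hD hz v)
    intro r hr
    rw [div_le_iff₀ (by positivity)]
    linarith [step r hr]
  rw [div_le_iff₀ (by positivity)] at h3
  linarith

/-- Upper bound of the Kobayashi distance on convex domains. -/
lemma convex_upper [ProperSpace E] [Nontrivial E] {D : Set E} (hD : IsOpen D) (hc : Convex ℝ D)
    (hb : Bornology.IsBounded D) {o : E} (ho : o ∈ D) :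
    ∃ A B : ℝ, 0 < A ∧ 0 < B ∧
      ∀ z ∈ D, kobDist D z o ≤ A + B * max (-Real.log (bdist D z)) 0 := by
  obtain ⟨ε2, hε2, hball2⟩ := Metric.isOpen_iff.mp hD o ho
  obtain ⟨ε, hε, rfl⟩ : ∃ ε, 0 < ε ∧ ε2 = 2 * ε := ⟨ε2 / 2, by linarith, by ring⟩
  obtain ⟨R, hR0, hR⟩ := hb.subset_closedBall_lt 0 o
  refine ⟨R / ε * (|Real.log (2 * ε)| + |Real.log ε|) + 1, R / ε, by positivity, by positivity, ?_⟩
  intro z hz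
  have hδ := bdist_pos hD hb hz
  set δ := min (bdist D z) ε with hδdef
  have hδ0 : 0 < δ := lt_min hδ hε
  have hδε : δ ≤ ε := min_le_right _ _
  have hbz : ball z δ ⊆ D := (ball_subset_ball (min_le_left _ _)).trans (ball_bdist_subset hD hz)
  have hK := segCurve (hc.segment_subset hz ho)
  have hsub : ∀ t ∈ Icc (0:ℝ) 1, ball (z + t • (o - z)) (δ + t * ε) ⊆ D := by
    intro t ht w hw
    have ht0 := ht.1
    have ht1 := ht.2
    set ρ := δ + t * ε with hρ
    have hρ0 : 0 < ρ := by positivity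
    set h := w - (z + t • (o - z)) with hh
    have hnorm : ‖h‖ < ρ := by rwa [mem_ball, dist_eq_norm] at hw
    set S := (1 - t) * δ + t * (2 * ε) with hS
    have hSρ : ρ ≤ S := by rw [hS, hρ]; nlinarith
    have hS0 : 0 < S := hρ0.trans_le hSρ
    have h1 : z + (δ / S) • h ∈ D := by
      apply hbz
      rw [mem_ball, dist_eq_norm, add_sub_cancel_left, norm_smul, Real.norm_eq_abs,
        abs_of_pos (by positivity), div_mul_eq_mul_div, div_lt_iff₀ hS0]
      gcongr
      linarith
    have h2 : o + ((2 * ε) / S) • h ∈ D := by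
      apply hball2
      rw [mem_ball, dist_eq_norm, add_sub_cancel_left, norm_smul, Real.norm_eq_abs,
        abs_of_pos (by positivity), div_mul_eq_mul_div, div_lt_iff₀ hS0]
      gcongr
      linarith
    have h3 := hc h1 h2 (sub_nonneg.mpr ht1) ht0 (by ring)
    have hco : (1 - t) * (δ / S) + t * ((2 * ε) / S) = 1 := by
      rw [← mul_div_assoc, ← mul_div_assoc, ← add_div, ← hS, div_self hS0.ne']
    have h4 : (1 - t) • (z + (δ / S) • h) + t • (o + ((2 * ε) / S) • h) = w := by
      have : (1 - t) • (z + (δ / S) • h) + t • (o + ((2 * ε) / S) • h)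
          = (z + t • (o - z)) + ((1 - t) * (δ / S) + t * ((2 * ε) / S)) • h := by module
      rw [this, hco, one_smul, hh]
      abel
    rwa [h4] at h3
  have hpos : ∀ t ∈ Icc (0:ℝ) 1, 0 < δ + t * ε := fun t ht => by
    have := ht.1
    positivity
  have hd2 : ∀ t ∈ uIcc (0:ℝ) 1, HasDerivAt (fun t : ℝ => ‖o - z‖ / ε * Real.log (δ + t * ε))
      (‖o - z‖ / (δ + t * ε)) t := by
    intro t ht
    rw [uIcc_of_le zero_le_one] at ht
    have h1 : HasDerivAt (fun t : ℝ => δ + t * ε) ε t := by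
      simpa using ((hasDerivAt_id t).mul_const ε).const_add δ
    have h2 := (h1.log (hpos t ht).ne').const_mul (‖o - z‖ / ε)
    have e : ‖o - z‖ / (δ + t * ε) = ‖o - z‖ / ε * (ε / (δ + t * ε)) := by
      have := (hpos t ht).ne'
      field_simp
    rw [e]
    exact h2
  have hi2 : IntervalIntegrable (fun t : ℝ => ‖o - z‖ / (δ + t * ε)) volume 0 1 := by
    apply ContinuousOn.intervalIntegrable
    rw [uIcc_of_le zero_le_one]
    refine ContinuousOn.div continuousOn_const (by fun_prop) fun t ht => (hpos t ht).ne'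
  have h1 : kobDist D z o ≤ ‖o - z‖ / ε * Real.log (δ + ε) - ‖o - z‖ / ε * Real.log δ := by
    calc kobDist D z o
        ≤ ∫ t in (0:ℝ)..1, kobMetric D (z + t • (o - z)) (o - z) := by
          simpa using hK.dist_le
      _ ≤ ∫ t in (0:ℝ)..1, ‖o - z‖ / (δ + t * ε) :=
          intervalIntegral.integral_mono_on zero_le_one (hK.integrable hD) hi2
            fun t ht => kobMetric_le_div (hpos t ht) (hsub t ht)
      _ = _ := by
          rw [intervalIntegral.integral_eq_sub_of_hasDerivAt hd2 hi2]
          simp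
  have hle : ‖o - z‖ ≤ R := by
    have := hR hz
    rwa [mem_closedBall, dist_comm, dist_eq_norm] at this
  have hlog1 : Real.log (δ + ε) ≤ |Real.log (2 * ε)| :=
    (Real.log_le_log (by positivity) (by linarith)).trans (le_abs_self _)
  have hlog2 : -Real.log δ ≤ max (-Real.log (bdist D z)) 0 + |Real.log ε| := by
    rcases min_choice (bdist D z) ε with h | h
    · rw [hδdef, h]
      linarith [le_max_left (-Real.log (bdist D z)) 0, abs_nonneg (Real.log ε)]
    · rw [hδdef, h]
      linarith [le_max_right (-Real.log (bdist D z)) 0, neg_abs_le (Real.log ε)]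
  have hlog3 : 0 ≤ Real.log (δ + ε) - Real.log δ :=
    sub_nonneg.mpr (Real.log_le_log hδ0 (by linarith))
  calc kobDist D z o ≤ ‖o - z‖ / ε * (Real.log (δ + ε) - Real.log δ) := by linarith
    _ ≤ R / ε * (Real.log (δ + ε) - Real.log δ) := by gcongr
    _ ≤ R / ε * (|Real.log (2 * ε)| + (max (-Real.log (bdist D z)) 0 + |Real.log ε|)) := by
        gcongr
        linarith
    _ ≤ _ := by linarith

end Geom

section Vis

variable {E : Type*} [NormedAddCommGroup E] [NormedSpace ℂ E] [ProperSpace E]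

/-- Near-minimal base time on a near-geodesic. -/
lemma NearGeo.exists_base {D : Set E} (hD : IsOpen D) (hcon : IsPreconnected D)
    {σ g : ℝ → E} {c d : ℝ} (h : NearGeo D σ g c d) {o : E} (ho : o ∈ D) :
    ∃ t₀ ∈ Icc c d, ∀ t ∈ Icc c d,
      |∫ s in t₀..t, kobMetric D (σ s) (g s)| ≤ 2 * kobDist D (σ t) o + 2 := by
  set S := (fun t => kobDist D (σ t) o) '' Icc c d with hS
  have hne : S.Nonempty := ⟨_, c, ⟨le_rfl, h.le⟩, rfl⟩
  have hbdd : BddBelow S := ⟨0, by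
    rintro _ ⟨t, -, rfl⟩
    exact kobDist_nonneg _ _ _⟩
  obtain ⟨_, ⟨t₀, ht₀, rfl⟩, hlt⟩ := exists_lt_of_csInf_lt hne (lt_add_one (sInf S))
  refine ⟨t₀, ht₀, fun t ht => ?_⟩
  have h1 : kobDist D (σ t₀) o ≤ kobDist D (σ t) o + 1 := by
    have := csInf_le hbdd ⟨t, ht, rfl⟩
    simp only at hlt this
    linarith
  have h2 := kobDist_triangle hD hcon (h.maps ht₀) ho (h.maps ht)
  rw [kobDist_comm D o] at h2
  rcases le_total t₀ t with hle | hle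
  · have h3 := h.sub_near hD hcon ht₀.1 hle ht.2
    rw [abs_of_nonneg (intervalIntegral.integral_nonneg hle fun s _ => kobMetric_nonneg _ _ _)]
    linarith
  · have h3 := h.sub_near hD hcon ht.1 hle ht₀.2
    rw [intervalIntegral.integral_symm, abs_neg,
      abs_of_nonneg (intervalIntegral.integral_nonneg hle fun s _ => kobMetric_nonneg _ _ _)]
    rw [kobDist_comm D (σ t)] at h3
    linarith

/-- Visibility type lemma. -/
lemma vis {Ω G : Set E} (hΩ : IsOpen Ω) (hcon : IsPreconnected Ω) {o : E} (ho : o ∈ Ω)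
    {A B C ν : ℝ} (hA : 0 < A) (hB : 0 < B) (hC : 0 < C) (hν : 0 < ν) {L : E → ℝ}
    (h1 : ∀ z ∈ G, kobDist Ω z o ≤ A + B * max (L z) 0)
    (h2 : ∀ z ∈ G, ∀ v, 0 < L z → ‖v‖ * L z ^ (1 + ν) ≤ C * kobMetric Ω z v)
    {r : ℝ} (hr : 0 < r) :
    ∃ M : ℝ, 0 < M ∧ ∀ (σ g : ℝ → E) (c d : ℝ), NearGeo Ω σ g c d → MapsTo σ (Icc c d) G →
      r ≤ ‖σ d - σ c‖ → ∃ t ∈ Icc c d, L (σ t) ≤ M := by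
  set C' : ℝ := C * (4 * B) ^ (1 + ν) with hC'
  have hC'0 : 0 < C' := by positivity
  have htend : Tendsto (fun m : ℝ => C' * (2 * (m ^ (-ν) / ν))) atTop (𝓝 0) := by
    have := (((tendsto_rpow_neg_atTop hν).div_const ν).const_mul 2).const_mul C'
    simpa using this
  obtain ⟨m, hm1, hm2, hm3⟩ := ((htend.eventually (gt_mem_nhds hr)).and
    ((eventually_ge_atTop (2 * A + 2)).and (eventually_ge_atTop 1))).exists
  have hm0 : 0 < m := by linarith
  refine ⟨m / B, by positivity, fun σ g c d hgeo hG hrd => ?_⟩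
  by_contra! hL
  obtain ⟨t₀, ht₀, hbase⟩ := hgeo.exists_base hΩ hcon ho
  set k : ℝ → ℝ := fun s => kobMetric Ω (σ s) (g s) with hk
  have hki : IntervalIntegrable k volume c d := hgeo.toKCurve.integrable hΩ
  obtain ⟨hIntg, hle⟩ := cv_full (k := k) (Φ := fun u => -((m + u) ^ (-ν) / ν))
    (φ := fun u => (m + u) ^ (-(1 + ν))) (T := m ^ (-ν) / ν) ht₀ hki
    (fun t => kobMetric_nonneg _ _ _)
    (by
      intro u hu
      have hp : 0 < m + u := by linarith
      have h3 := ((((hasDerivAt_id u).const_add m).rpow_const (p := -ν)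
        (Or.inl hp.ne')).div_const ν).neg
      have e : (m + u) ^ (-(1 + ν)) = -(1 * (-ν) * (m + u) ^ (-ν - 1) / ν) := by
        rw [show -(1 + ν) = -ν - 1 by ring]
        field_simp
      rw [e]
      exact h3)
    (by
      refine ContinuousOn.rpow_const (by fun_prop) ?_
      intro u hu
      left
      have : (0:ℝ) ≤ u := hu
      linarith)
    (by
      intro u hu
      have : 0 ≤ (m + u) ^ (-ν) / ν := by positivity
      simp only [add_zero]
      linarith)
  have hpt : ∀ t ∈ Icc c d, ‖g t‖ ≤
      C' * ((m + |∫ s in t₀..t, k s|) ^ (-(1 + ν)) * k t) := by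
    intro t ht
    have hLt := hL t ht
    have hLm : m < B * L (σ t) := by
      rw [div_lt_iff₀ hB] at hLt
      linarith
    have hL0 : 0 < L (σ t) := lt_trans (by positivity) hLt
    have hb := hbase t ht
    have hh1 := h1 _ (hG ht)
    rw [max_eq_left hL0.le] at hh1
    have hh2 := h2 _ (hG ht) (g t) hL0
    set u := |∫ s in t₀..t, k s| with hu
    have hu0 : 0 ≤ u := abs_nonneg _
    have hmu : m + u ≤ 4 * B * L (σ t) := by
      have : u ≤ 2 * kobDist Ω (σ t) o + 2 := hb
      linarith
    have hmu0 : 0 < m + u := by linarith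
    have hpow : (m + u) ^ (1 + ν) ≤ (4 * B) ^ (1 + ν) * L (σ t) ^ (1 + ν) := by
      rw [← Real.mul_rpow (by positivity) hL0.le]
      exact Real.rpow_le_rpow hmu0.le hmu (by linarith)
    have hP : 0 < (m + u) ^ (1 + ν) := Real.rpow_pos_of_pos hmu0 _
    rw [Real.rpow_neg hmu0.le, ← div_eq_inv_mul, mul_div_assoc', le_div_iff₀ hP]
    calc ‖g t‖ * (m + u) ^ (1 + ν) ≤ ‖g t‖ * ((4 * B) ^ (1 + ν) * L (σ t) ^ (1 + ν)) := by gcongr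
      _ = (4 * B) ^ (1 + ν) * (‖g t‖ * L (σ t) ^ (1 + ν)) := by ring
      _ ≤ (4 * B) ^ (1 + ν) * (C * k t) := by gcongr
      _ = C' * k t := by rw [hC']; ring
  have hsub := hgeo.toKCurve.sub_eq le_rfl hgeo.le le_rfl
  have hfin : ‖σ d - σ c‖ ≤ C' * (2 * (m ^ (-ν) / ν)) := by
    calc ‖σ d - σ c‖ = ‖∫ s in c..d, g s‖ := by rw [hsub, add_sub_cancel_left]
      _ ≤ ∫ s in c..d, ‖g s‖ := intervalIntegral.norm_integral_le_integral_norm hgeo.le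
      _ ≤ ∫ t in c..d, C' * ((m + |∫ s in t₀..t, k s|) ^ (-(1 + ν)) * k t) :=
          intervalIntegral.integral_mono_on hgeo.le hgeo.ac.1.norm (hIntg.const_mul C') hpt
      _ = C' * ∫ t in c..d, (m + |∫ s in t₀..t, k s|) ^ (-(1 + ν)) * k t :=
          intervalIntegral.integral_const_mul _ _
      _ ≤ _ := by gcongr
  linarith

/-- First exit time. -/
lemma exists_first_exit {σ : ℝ → E} {a b : ℝ} (hab : a ≤ b) (hσ : ContinuousOn σ (Icc a b))
    {r : ℝ} (hr : 0 ≤ r) (hb : r ≤ ‖σ b - σ a‖) :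
    ∃ τ ∈ Icc a b, r = ‖σ τ - σ a‖ ∧ ∀ t ∈ Icc a τ, ‖σ t - σ a‖ ≤ r := by
  have hc : ContinuousOn (fun t => ‖σ t - σ a‖) (Icc a b) := (hσ.sub continuousOn_const).norm
  set S := Icc a b ∩ (fun t => ‖σ t - σ a‖) ⁻¹' {r} with hS
  have hclosed : IsClosed S := hc.preimage_isClosed_of_isClosed isClosed_Icc isClosed_singleton
  have hcomp : IsCompact S := isCompact_Icc.of_isClosed_subset hclosed inter_subset_left
  have hne : S.Nonempty := by
    obtain ⟨t, ht, h⟩ := intermediate_value_Icc hab hc (show r ∈ Icc _ _ from ⟨by simpa, hb⟩)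
    exact ⟨t, ht, h⟩
  obtain ⟨τ, ⟨hτ, hτr⟩, hmin⟩ := hcomp.exists_isLeast hne
  have hτr' : ‖σ τ - σ a‖ = r := hτr
  refine ⟨τ, hτ, hτr'.symm, fun t ht => ?_⟩
  by_contra! hlt
  have hsub : Icc a t ⊆ Icc a b := Icc_subset_Icc le_rfl (ht.2.trans hτ.2)
  obtain ⟨t', ht', h'⟩ := intermediate_value_Icc ht.1 (hc.mono hsub)
    (show r ∈ Icc _ _ from ⟨by simpa, hlt.le⟩)
  have h3 : τ ≤ t' := hmin ⟨hsub ht', h'⟩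
  have h4 : t = τ := le_antisymm ht.2 (h3.trans ht'.2)
  rw [h4] at hlt
  linarith

/-- Last exit time. -/
lemma exists_last_exit {σ : ℝ → E} {a b : ℝ} (hab : a ≤ b) (hσ : ContinuousOn σ (Icc a b))
    {r : ℝ} (hr : 0 ≤ r) (hb : r ≤ ‖σ a - σ b‖) :
    ∃ τ ∈ Icc a b, r = ‖σ τ - σ b‖ ∧ ∀ t ∈ Icc τ b, ‖σ t - σ b‖ ≤ r := by
  have hσ' : ContinuousOn (fun t => σ (-t)) (Icc (-b) (-a)) :=
    hσ.comp (by fun_prop) fun t ht => ⟨by linarith [ht.2], by linarith [ht.1]⟩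
  obtain ⟨τ, hτ, h1, h2⟩ := exists_first_exit (σ := fun t => σ (-t)) (neg_le_neg hab) hσ' hr
    (by simpa using hb)
  simp only [neg_neg] at h1 h2
  refine ⟨-τ, ⟨by linarith [hτ.2], by linarith [hτ.1]⟩, h1, fun t ht => ?_⟩
  have := h2 (-t) ⟨by linarith [ht.2], by linarith [ht.1]⟩
  simpa using this

end Vis

section Main

variable {E : Type*} [NormedAddCommGroup E] [NormedSpace ℂ E] [ProperSpace E]

/-- Comparison of lengths along near-geodesics. -/
lemma length_compare {Ω D : Set E} (hΩ : IsOpen Ω) (hcon : IsPreconnected Ω) (hD : IsOpen D)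
    {o : E} (ho : o ∈ Ω) {C : ℝ} (hC : 0 ≤ C) {σ g : ℝ → E} {c d : ℝ} (hgeo : NearGeo Ω σ g c d)
    (hm : MapsTo σ (Icc c d) D)
    (hk : ∀ t ∈ Icc c d, ∀ v, kobMetric D (σ t) v ≤
      (1 + C * Real.exp (-kobDist Ω (σ t) o)) * kobMetric Ω (σ t) v) :
    kobDist D (σ c) (σ d) ≤
      (∫ t in c..d, kobMetric Ω (σ t) (g t)) + C * Real.exp 1 * 4 := by
  obtain ⟨t₀, ht₀, hbase⟩ := hgeo.exists_base hΩ hcon ho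
  set k : ℝ → ℝ := fun s => kobMetric Ω (σ s) (g s) with hkdef
  have hki : IntervalIntegrable k volume c d := hgeo.toKCurve.integrable hΩ
  obtain ⟨hIntg, hle⟩ := cv_full (k := k) (Φ := fun u => -(2 * Real.exp (-(u / 2))))
    (φ := fun u => Real.exp (-(u / 2))) (T := 2) ht₀ hki
    (fun t => kobMetric_nonneg _ _ _)
    (by
      intro u hu
      have h3 := ((((hasDerivAt_id u).div_const 2).neg.exp).const_mul 2).neg
      have e : Real.exp (-(u / 2)) = -(2 * (Real.exp (-(u / 2)) * -(1 / 2))) := by ring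
      rw [e]
      exact h3)
    (by fun_prop)
    (by
      intro u hu
      have := Real.exp_pos (-(u / 2))
      simp only [zero_div, neg_zero, Real.exp_zero]
      linarith)
  have hpt : ∀ t ∈ Icc c d, kobMetric D (σ t) (g t) ≤
      k t + C * Real.exp 1 * (Real.exp (-(|∫ s in t₀..t, k s| / 2)) * k t) := by
    intro t ht
    have h1 := hbase t ht
    have h2 : Real.exp (-kobDist Ω (σ t) o) ≤
        Real.exp 1 * Real.exp (-(|∫ s in t₀..t, k s| / 2)) := by
      rw [← Real.exp_add]
      apply Real.exp_le_exp.mpr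
      linarith
    have hk0 : 0 ≤ k t := kobMetric_nonneg _ _ _
    calc kobMetric D (σ t) (g t) ≤ (1 + C * Real.exp (-kobDist Ω (σ t) o)) * k t := hk t ht (g t)
      _ ≤ (1 + C * (Real.exp 1 * Real.exp (-(|∫ s in t₀..t, k s| / 2)))) * k t := by gcongr
      _ = _ := by ring
  have hKD : KCurve D σ g c d := hgeo.toKCurve.mono hm
  calc kobDist D (σ c) (σ d) ≤ ∫ t in c..d, kobMetric D (σ t) (g t) := hKD.dist_le
    _ ≤ ∫ t in c..d, (k t + C * Real.exp 1 * (Real.exp (-(|∫ s in t₀..t, k s| / 2)) * k t)) :=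
        intervalIntegral.integral_mono_on hgeo.le (hKD.integrable hD)
          (hki.add (hIntg.const_mul _)) hpt
    _ = (∫ t in c..d, k t) + C * Real.exp 1 *
          ∫ t in c..d, (Real.exp (-(|∫ s in t₀..t, k s| / 2)) * k t) := by
        rw [intervalIntegral.integral_add hki (hIntg.const_mul _),
          intervalIntegral.integral_const_mul]
    _ ≤ _ := by
        have : (0:ℝ) ≤ C * Real.exp 1 := by positivity
        have h4 := mul_le_mul_of_nonneg_left hle this
        linarith

theorem main_thm [Nontrivial E] (Ω U : Set E)
    (hΩo : IsOpen Ω) (hΩc : IsConnected Ω) (hΩb : Bornology.IsBounded Ω)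
    (hUo : IsOpen U)
    (hlog : LogTypeConvex (Ω ∩ U))
    (V : Set E) (hclV : closure V ⊆ U) :
    ∃ K : ℝ, 0 < K ∧ ∀ p ∈ V ∩ Ω, ∀ q ∈ V ∩ Ω,
      kobDist Ω p q ≤ kobDist (Ω ∩ U) p q ∧
      kobDist (Ω ∩ U) p q ≤ kobDist Ω p q + K := by
  obtain ⟨C0, ν, hDo, ⟨o, hoD⟩, hDb, hDc, hC0, hν, hlt⟩ := hlog
  have hcon : IsPreconnected Ω := hΩc.isPreconnected
  set D := Ω ∩ U with hDdef
  have hDcon : IsPreconnected D := hDc.isPreconnected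
  have hDΩ : D ⊆ Ω := inter_subset_left
  have ho : o ∈ Ω := hoD.1
  -- the radius
  obtain ⟨r, hr, hball⟩ : ∃ r : ℝ, 0 < r ∧ ∀ z ∈ V ∩ Ω, ball z (3 * r) ⊆ U := by
    have hcomp : IsCompact (closure (V ∩ Ω)) :=
      (hΩb.subset inter_subset_right).isCompact_closure
    obtain ⟨δ, hδ, hsub⟩ := hcomp.exists_thickening_subset_open hUo
      ((closure_mono inter_subset_left).trans hclV)
    refine ⟨δ / 3, by positivity, fun z hz => ?_⟩
    rw [show 3 * (δ / 3) = δ by ring]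
    exact (ball_subset_thickening (subset_closure hz) δ).trans hsub
  set L : E → ℝ := fun z => -Real.log (bdist D z) with hL
  -- rough comparison
  obtain ⟨s0, hs0, hs01, hcomp0⟩ : ∃ s0 : ℝ, 0 < s0 ∧ s0 ≤ 1 ∧ ∀ z ∈ Ω, ball z r ⊆ U → ∀ v,
      kobMetric D z v ≤ s0⁻¹ * kobMetric Ω z v := by
    obtain ⟨R0, hR0⟩ := Metric.isBounded_iff.mp hΩb
    set R := max R0 1 with hR
    have hRpos : 0 < R := lt_of_lt_of_le one_pos (le_max_right _ _)
    refine ⟨min 1 (r / R), by positivity, min_le_left _ _, fun z hz hzb v => ?_⟩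
    refine kobMetric_local hΩo hz v (by positivity) (min_le_left _ _) ?_
    intro f hf hm h0 w hw
    have hw1 : w ∈ ball (0:ℂ) 1 := by
      rw [mem_ball_zero_iff]
      exact hw.trans_le (min_le_left _ _)
    refine ⟨hm hw1, hzb ?_⟩
    have h1 := Complex.dist_le_div_mul_dist_of_mapsTo_ball (R₂ := R) hf (fun x hx => by
      rw [mem_closedBall]
      exact (hR0 (hm hx) (hm (by simp))).trans (le_max_left _ _)) hw1
    rw [h0, div_one, dist_zero_right] at h1
    rw [mem_ball]
    have h2 : ‖w‖ < r / R := hw.trans_le (min_le_right _ _)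
    rw [lt_div_iff₀ hRpos] at h2
    linarith
  obtain ⟨A, B, hA, hB, hupD⟩ := convex_upper hDo hDc hDb hoD
  set G : Set E := {x | x ∈ Ω ∧ ball x r ⊆ U} with hG
  have hGD : ∀ z ∈ G, z ∈ D := fun z hz => ⟨hz.1, hz.2 (mem_ball_self hr)⟩
  have h1 : ∀ z ∈ G, kobDist Ω z o ≤ A + B * max (L z) 0 := fun z hz =>
    (kobDist_mono hDo hDcon hΩo hDΩ (hGD z hz) hoD).trans (hupD z (hGD z hz))
  have h2 : ∀ z ∈ G, ∀ v, 0 < L z → ‖v‖ * L z ^ (1 + ν) ≤ (4 * C0 * s0⁻¹) * kobMetric Ω z v := by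
    intro z hz v hLz
    have hk0 := kobMetric_nonneg Ω z v
    by_cases hv : v = 0
    · subst hv
      rw [norm_zero, zero_mul]
      positivity
    have h3 := convex_lower hDo hDc hDb (hGD z hz) hv
    have h4 := hlt z (hGD z hz) v hv
    have habs : |Real.log (bdist D z)| = L z := by
      rw [← abs_neg]
      exact abs_of_pos hLz
    rw [habs] at h4
    have h5 := hcomp0 z hz.1 hz.2 v
    have hP : 0 < L z ^ (1 + ν) := Real.rpow_pos_of_pos hLz _
    rw [le_div_iff₀ hP] at h4
    have hkD := kobMetric_nonneg D z v
    calc ‖v‖ * L z ^ (1 + ν) ≤ (4 * bdistDir D z v * kobMetric D z v) * L z ^ (1 + ν) := by gcongr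
      _ = 4 * (bdistDir D z v * L z ^ (1 + ν)) * kobMetric D z v := by ring
      _ ≤ 4 * C0 * kobMetric D z v := by gcongr
      _ ≤ 4 * C0 * (s0⁻¹ * kobMetric Ω z v) := by gcongr
      _ = _ := by ring
  obtain ⟨M, hM, hvis⟩ := vis hΩo hcon ho hA hB (by positivity) hν h1 h2 hr
  set P := A + B * M with hP
  have hP0 : 0 < P := by positivity
  have hPD : ∀ z ∈ D, L z ≤ M → kobDist D z o ≤ P := by
    intro z hz hLz
    refine (hupD z hz).trans ?_
    have : max (L z) 0 ≤ M := max_le hLz hM.le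
    rw [hP]
    gcongr
  have hPΩ : ∀ z ∈ D, L z ≤ M → kobDist Ω z o ≤ P := fun z hz hLz =>
    (kobDist_mono hDo hDcon hΩo hDΩ hz hoD).trans (hPD z hz hLz)
  have hnear : ∀ z, ball z (2 * r) ⊆ U → ∀ x ∈ Ω, ‖x - z‖ ≤ r → x ∈ G := by
    intro z hz x hx hxz
    refine ⟨hx, (ball_subset_ball' ?_).trans hz⟩
    rw [dist_eq_norm]
    linarith
  -- distance to the outside
  have claim1 : ∀ z ∈ Ω, ball z (2 * r) ⊆ U → ∀ y ∈ Ω, y ∉ U →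
      kobDist Ω z o - 1 - P ≤ kobDist Ω z y := by
    intro z hz hzb y hy hyU
    obtain ⟨σ, g, a, b, hgeo, rfl, rfl⟩ := exists_nearGeo hΩo hcon hz hy
    have hfar : r ≤ ‖σ b - σ a‖ := by
      by_contra! hlt'
      apply hyU
      apply hzb
      rw [mem_ball, dist_eq_norm]
      linarith
    obtain ⟨τ, hτ, hτr, hτin⟩ := exists_first_exit hgeo.le hgeo.toKCurve.continuousOn hr.le hfar
    have hmG : MapsTo σ (Icc a τ) G := fun t ht =>
      hnear _ hzb _ (hgeo.maps ⟨ht.1, ht.2.trans hτ.2⟩) (hτin t ht)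
    obtain ⟨t, ht, hLt⟩ := hvis σ g a τ (hgeo.sub hΩo hcon le_rfl hτ.1 hτ.2) hmG hτr.le
    have htb : t ≤ b := ht.2.trans hτ.2
    have e1 := (hgeo.toKCurve.sub le_rfl ht.1 htb).dist_le
    have k2 := (hgeo.toKCurve.sub le_rfl ht.1 htb).integrable hΩo
    have k3 := (hgeo.toKCurve.sub ht.1 htb le_rfl).integrable hΩo
    have e2 := intervalIntegral.integral_add_adjacent_intervals k2 k3
    have e3 : 0 ≤ ∫ s in t..b, kobMetric Ω (σ s) (g s) :=
      intervalIntegral.integral_nonneg htb fun _ _ => kobMetric_nonneg _ _ _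
    have e4 := hgeo.near
    have e5 := hPΩ _ (hGD _ (hmG ht)) hLt
    have e6 := kobDist_triangle hΩo hcon hz (hgeo.maps ⟨ht.1, htb⟩) ho
    linarith
  -- Royden localisation
  set C2 := 2 * s0⁻¹ * Real.exp (1 + P) with hC2
  have hs0inv : 1 ≤ s0⁻¹ := (one_le_inv₀ hs0).mpr hs01
  have hC20 : 0 < C2 := by positivity
  have royden : ∀ z ∈ Ω, ball z (2 * r) ⊆ U → ∀ v, kobMetric D z v ≤
      (1 + C2 * Real.exp (-kobDist Ω z o)) * kobMetric Ω z v := by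
    intro z hz hzb v
    have hk0 := kobMetric_nonneg Ω z v
    set e := Real.exp (-(kobDist Ω z o - 1 - P)) with he
    have he0 : 0 < e := Real.exp_pos _
    have hC2e : C2 * Real.exp (-kobDist Ω z o) = 2 * s0⁻¹ * e := by
      rw [hC2, he, mul_assoc, ← Real.exp_add]
      congr 2
      ring
    rw [hC2e]
    by_cases hhalf : e ≤ 1 / 2
    · have hs : 0 < 1 - e := by linarith
      have h3 : kobMetric D z v ≤ (1 - e)⁻¹ * kobMetric Ω z v := by
        refine kobMetric_local hΩo hz v hs (by linarith) ?_
        intro f hf hm h0 w hw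
        have hw1 : ‖w‖ < 1 := by linarith
        have hwm : f w ∈ Ω := hm (by rwa [mem_ball_zero_iff])
        refine ⟨hwm, ?_⟩
        by_contra hwU
        have h4 := claim1 z hz hzb _ hwm hwU
        have h5 := kobDist_disc hΩo hf hm hw1
        rw [h0] at h5
        have h6 : Real.log e < Real.log (1 - ‖w‖) := Real.log_lt_log he0 (by linarith)
        rw [he, Real.log_exp] at h6
        linarith
      refine h3.trans (mul_le_mul_of_nonneg_right ?_ hk0)
      rw [inv_le_iff_one_le_mul₀ hs]
      have h7 : 2 * e ≤ 2 * s0⁻¹ * e := by nlinarith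
      nlinarith
    · push Not at hhalf
      have h3 := hcomp0 z hz ((ball_subset_ball (by linarith)).trans hzb) v
      refine h3.trans (mul_le_mul_of_nonneg_right ?_ hk0)
      nlinarith
  -- conclusion
  have hcmp : ∀ (σ g : ℝ → E) (c d : ℝ), NearGeo Ω σ g c d →
      (∀ t ∈ Icc c d, ball (σ t) (2 * r) ⊆ U) →
      kobDist D (σ c) (σ d) ≤
        (∫ t in c..d, kobMetric Ω (σ t) (g t)) + C2 * Real.exp 1 * 4 := by
    intro σ g c d hgeo hW
    refine length_compare hΩo hcon hDo ho hC20.le hgeo ?_ ?_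
    · exact fun t ht => ⟨hgeo.maps ht, hW t ht (mem_ball_self (by linarith))⟩
    · exact fun t ht v => royden _ (hgeo.maps ht) (hW t ht) v
  set Q := C2 * Real.exp 1 * 4 with hQ
  have hQ0 : 0 < Q := by positivity
  refine ⟨1 + 2 * Q + 2 * P, by positivity, fun p hp q hq => ?_⟩
  have hpD : p ∈ D := ⟨hp.2, hclV (subset_closure hp.1)⟩
  have hqD : q ∈ D := ⟨hq.2, hclV (subset_closure hq.1)⟩
  refine ⟨kobDist_mono hDo hDcon hΩo hDΩ hpD hqD, ?_⟩
  obtain ⟨σ, g, a, b, hgeo, rfl, rfl⟩ := exists_nearGeo hΩo hcon hp.2 hq.2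
  have hnr := hgeo.near
  by_cases hall : ∀ t ∈ Icc a b, ball (σ t) (2 * r) ⊆ U
  · have := hcmp σ g a b hgeo hall
    linarith
  push Not at hall
  obtain ⟨t', ht', hout⟩ := hall
  have hfar : ∀ x ∈ V ∩ Ω, r ≤ ‖σ t' - x‖ := by
    intro x hx
    by_contra! hlt'
    apply hout
    refine (ball_subset_ball' ?_).trans (hball x hx)
    rw [dist_eq_norm]
    linarith
  have hWnear : ∀ x ∈ V ∩ Ω, ∀ y, ‖y - x‖ ≤ r → ball y (2 * r) ⊆ U := by
    intro x hx y hy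
    refine (ball_subset_ball' ?_).trans (hball x hx)
    rw [dist_eq_norm]
    linarith
  have hcont := hgeo.toKCurve.continuousOn
  obtain ⟨τ₁, hτ₁, hr₁, hin₁⟩ := exists_first_exit ht'.1
    (hcont.mono (Icc_subset_Icc le_rfl ht'.2)) hr.le (hfar _ hp)
  obtain ⟨τ₂, hτ₂, hr₂, hin₂⟩ := exists_last_exit ht'.2
    (hcont.mono (Icc_subset_Icc ht'.1 le_rfl)) hr.le (hfar _ hq)
  have hτ₁b : τ₁ ≤ b := hτ₁.2.trans ht'.2
  have haτ₂ : a ≤ τ₂ := ht'.1.trans hτ₂.1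
  have hW₁ : ∀ t ∈ Icc a τ₁, ball (σ t) (2 * r) ⊆ U := fun t ht => hWnear _ hp _ (hin₁ t ht)
  have hW₂ : ∀ t ∈ Icc τ₂ b, ball (σ t) (2 * r) ⊆ U := fun t ht => hWnear _ hq _ (hin₂ t ht)
  have hG₁ : MapsTo σ (Icc a τ₁) G := fun t ht =>
    ⟨hgeo.maps ⟨ht.1, ht.2.trans hτ₁b⟩, (ball_subset_ball (by linarith)).trans (hW₁ t ht)⟩
  have hG₂ : MapsTo σ (Icc τ₂ b) G := fun t ht =>
    ⟨hgeo.maps ⟨haτ₂.trans ht.1, ht.2⟩, (ball_subset_ball (by linarith)).trans (hW₂ t ht)⟩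
  obtain ⟨t₁, ht₁, hL₁⟩ := hvis σ g a τ₁ (hgeo.sub hΩo hcon le_rfl hτ₁.1 hτ₁b) hG₁ hr₁.le
  obtain ⟨t₂, ht₂, hL₂⟩ := hvis σ g τ₂ b (hgeo.sub hΩo hcon haτ₂ hτ₂.2 le_rfl) hG₂
    (by rw [norm_sub_rev]; exact hr₂.le)
  have ht₁b : t₁ ≤ b := ht₁.2.trans hτ₁b
  have hat₂ : a ≤ t₂ := haτ₂.trans ht₂.1
  have ht₁₂ : t₁ ≤ t₂ := ht₁.2.trans (hτ₁.2.trans (hτ₂.1.trans ht₂.1))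
  have c₁ := hcmp σ g a t₁ (hgeo.sub hΩo hcon le_rfl ht₁.1 ht₁b)
    fun t ht => hW₁ t ⟨ht.1, ht.2.trans ht₁.2⟩
  have c₂ := hcmp σ g t₂ b (hgeo.sub hΩo hcon hat₂ ht₂.2 le_rfl)
    fun t ht => hW₂ t ⟨ht₂.1.trans ht.1, ht.2⟩
  have hD₁ : σ t₁ ∈ D := hGD _ (hG₁ ht₁)
  have hD₂ : σ t₂ ∈ D := hGD _ (hG₂ ht₂)
  have p₁ := hPD _ hD₁ hL₁
  have p₂ := hPD _ hD₂ hL₂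
  rw [kobDist_comm] at p₂
  have T1 := kobDist_triangle hDo hDcon hpD hD₁ hqD
  have T2 := kobDist_triangle hDo hDcon hD₁ hoD hqD
  have T3 := kobDist_triangle hDo hDcon hoD hD₂ hqD
  have i₁ := (hgeo.toKCurve.sub le_rfl ht₁.1 ht₁b).integrable hΩo
  have i₂ := (hgeo.toKCurve.sub ht₁.1 ht₁₂ ht₂.2).integrable hΩo
  have i₃ := (hgeo.toKCurve.sub hat₂ ht₂.2 le_rfl).integrable hΩo
  have s₁ := intervalIntegral.integral_add_adjacent_intervals i₁ i₂
  have s₂ := intervalIntegral.integral_add_adjacent_intervals (i₁.trans i₂) i₃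
  have n₂ : 0 ≤ ∫ s in t₁..t₂, kobMetric Ω (σ s) (g s) :=
    intervalIntegral.integral_nonneg ht₁₂ fun _ _ => kobMetric_nonneg _ _ _
  linarith

end Main

theorem statement_0 {n : ℕ} (hn : 2 ≤ n)
    (Ω U : Set (EuclideanSpace ℂ (Fin n)))
    (hΩo : IsOpen Ω) (hΩc : IsConnected Ω) (hΩb : Bornology.IsBounded Ω)
    (hUo : IsOpen U) (hUc : IsConnected U)
    (hfr : (U ∩ frontier Ω).Nonempty)
    (hlog : LogTypeConvex (Ω ∩ U))
    (V : Set (EuclideanSpace ℂ (Fin n))) (hVo : IsOpen V) (hVU : V ⊆ U)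
    (hclV : closure V ⊆ U) :
    ∃ K : ℝ, 0 < K ∧ ∀ p ∈ V ∩ Ω, ∀ q ∈ V ∩ Ω,
      kobDist Ω p q ≤ kobDist (Ω ∩ U) p q ∧
      kobDist (Ω ∩ U) p q ≤ kobDist Ω p q + K := by
  have : Nonempty (Fin n) := ⟨⟨0, by omega⟩⟩
  exact main_thm Ω U hΩo hΩc hΩb hUo hlog V hclV
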